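/- Let Π ⊆ ℝ² be a convex hexagon and let N ≥ 1 and C : Fin N → ℝ² be a finite sequence of centers such that Π ⊆ ⋃ᵢ closedBall(C i, 1), such that 0 < dist(C (i+1), C i) ≤ 1 for every i with i+1 < N, and such that for every i with 1 ≤ i ≤ N−2 the undirected Euclidean angle ∠ C(i−1) C(i) C(i+1) is at least 2π/3. Then volume(Π) ≤ N·(1 + √3/2) + 2π. -/

import Mathlib

open Metric MeasureTheory Real
open scoped ENNReal

noncomputable section

/-- The Euclidean plane. -/
abbrev Pt := EuclideanSpace ℝ (Fin 2)

/-- A convex hexagon: a compact convex subset of the plane with nonempty interior having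
exactly 6 extreme points. -/
def IsConvexHexagon (s : Set Pt) : Prop :=
  IsCompact s ∧ Convex ℝ s ∧ (interior s).Nonempty ∧ (Set.extremePoints ℝ s).ncard = 6

/-- slope of the tangent of `sin/2` at `π/6` -/
def lam : ℝ := Real.sqrt 3 / 4
/-- intercept of that tangent -/
def cc : ℝ := 1 / 4 - Real.sqrt 3 * π / 24

lemma sqrt3_sq : Real.sqrt 3 * Real.sqrt 3 = 3 := Real.mul_self_sqrt (by norm_num)
lemma sqrt3_lb : (1.732 : ℝ) < Real.sqrt 3 := by
  apply Real.lt_sqrt_of_sq_lt; norm_num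
lemma sqrt3_ub : Real.sqrt 3 < (1.7321 : ℝ) := by
  rw [Real.sqrt_lt' (by norm_num)]; norm_num

lemma cc_lb : (0.023 : ℝ) < cc := by
  unfold cc
  nlinarith [sqrt3_ub, sqrt3_lb, Real.pi_lt_d4, Real.pi_gt_d4]
lemma cc_ub : cc < (0.024 : ℝ) := by
  unfold cc
  nlinarith [sqrt3_ub, sqrt3_lb, Real.pi_lt_d4, Real.pi_gt_d4]
lemma lam_lb : (0.433 : ℝ) < lam := by
  unfold lam; linarith [sqrt3_lb]

lemma sin_le0 {d : ℝ} (hd : 0 ≤ d) : sin d / 2 ≤ cc + lam * d := by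
  have key : ∀ e : ℝ, -(π / 6) ≤ e →
      1 / 2 * cos e + Real.sqrt 3 / 2 * sin e ≤ 1 / 2 + Real.sqrt 3 / 2 * e := by
    intro e he
    rcases le_or_gt 0 e with h0 | h0
    · have := Real.sin_le h0
      have := Real.cos_le_one e
      nlinarith [sqrt3_lb]
    · have h1 : 0 < -e := by linarith
      have h2 : -e ≤ 1 := by linarith [Real.pi_lt_d4]
      have h3 := Real.sin_gt_sub_cube h1
      have h4 := Real.cos_le_one_sub_mul_cos_sq (x := e)
        (by rw [abs_of_neg h0]; linarith [Real.pi_gt_three])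
      have h5 : (0.2 : ℝ) ≤ 2 / π ^ 2 := by
        rw [le_div_iff₀ (by positivity)]; nlinarith [Real.pi_lt_d4, Real.pi_pos]
      rw [Real.sin_neg] at h3
      have h6 : cos e ≤ 1 - 0.2 * e ^ 2 := by nlinarith [sq_nonneg e]
      have h7 : -e ≤ 0.53 := by linarith [Real.pi_lt_d4]
      have h8 : 0 ≤ e ^ 2 * (0.53 + e) := by
        apply mul_nonneg (sq_nonneg e); linarith
      have h9 : sin e < e - e ^ 3 / 6 := by nlinarith
      have h10 : Real.sqrt 3 / 2 * sin e ≤ Real.sqrt 3 / 2 * (e - e ^ 3 / 6) :=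
        mul_le_mul_of_nonneg_left h9.le (by positivity)
      have h11 : 0 ≤ - e ^ 3 := by
        have : - e ^ 3 = e ^ 2 * (-e) := by ring
        rw [this]; positivity
      have h12 := mul_nonneg h11 (sub_nonneg.2 sqrt3_ub.le)
      nlinarith [sq_nonneg e]
  have h := key (d - π / 6) (by linarith)
  have hs : sin d = 1 / 2 * cos (d - π / 6) + Real.sqrt 3 / 2 * sin (d - π / 6) := by
    have : sin d = sin ((d - π / 6) + π / 6) := by ring_nf
    rw [this, Real.sin_add, Real.cos_pi_div_six, Real.sin_pi_div_six]; ring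
  rw [hs]; unfold cc lam
  linarith

lemma sin_le1 {d : ℝ} (hd : 2 * π / 3 ≤ d) : sin d / 2 ≤ lam * (1 + d - 2 * π / 3) := by
  obtain ⟨e, rfl⟩ : ∃ e, d = 2 * π / 3 + e := ⟨d - 2 * π / 3, by ring⟩
  have he : 0 ≤ e := by linarith
  have h1 : sin (2 * π / 3) = Real.sqrt 3 / 2 := by
    rw [show 2 * π / 3 = π - π / 3 by ring, Real.sin_pi_sub, Real.sin_pi_div_three]
  have h2 : cos (2 * π / 3) = - (1 / 2) := by
    rw [show 2 * π / 3 = π - π / 3 by ring, Real.cos_pi_sub, Real.cos_pi_div_three]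
  rw [Real.sin_add, h1, h2]
  have h3 : -e ≤ sin e := by
    have := Real.sin_le (x := e) he
    have := Real.abs_sin_le_abs (x := e)
    rw [abs_of_nonneg he] at this
    exact (abs_le.1 this).1
  have h4 := Real.cos_le_one e
  unfold lam
  nlinarith [sqrt3_lb]

lemma sin_le2 {d : ℝ} (hd : 4 * π / 3 ≤ d) (hd2 : d ≤ 2 * π) :
    sin d / 2 ≤ lam * (2 + d - 4 * π / 3) - cc := by
  have h : sin d ≤ 0 := by
    have : sin (d - 2 * π) ≤ 0 :=
      Real.sin_nonpos_of_nonpos_of_neg_pi_le (by linarith) (by linarith [Real.pi_pos])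
    rwa [Real.sin_sub_two_pi] at this
  have := lam_lb
  have := cc_ub
  nlinarith

lemma chord_conv {τ : ℝ} (h : |τ| < π / 3) :
    0 ≤ 1 / (2 * cos τ) ∧ ∃ x y : ℝ, 0 ≤ x ∧ 0 ≤ y ∧ x + y = 1 ∧
      (∀ φ, 1 / (2 * cos τ) * sin (φ + τ) = x * sin (φ - π / 3) + y * sin (φ + π / 3)) ∧
      (∀ φ, 1 / (2 * cos τ) * sin (φ - τ) = x * sin (φ + π / 3) + y * sin (φ - π / 3)) := by
  have hc : 0 < cos τ := Real.cos_pos_of_mem_Ioo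
    ⟨by linarith [(abs_lt.1 h).1, Real.pi_pos], by linarith [(abs_lt.1 h).2, Real.pi_pos]⟩
  have hs : Real.sqrt 3 ≠ 0 := by positivity
  have h1 : 0 ≤ sin (π / 3 - τ) := Real.sin_nonneg_of_nonneg_of_le_pi
    (by linarith [(abs_lt.1 h).2]) (by linarith [(abs_lt.1 h).1, Real.pi_pos])
  have h2 : 0 ≤ sin (π / 3 + τ) := Real.sin_nonneg_of_nonneg_of_le_pi
    (by linarith [(abs_lt.1 h).1]) (by linarith [(abs_lt.1 h).2, Real.pi_pos])
  have h3 := sqrt3_sq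
  refine ⟨by positivity, sin (π / 3 - τ) / (Real.sqrt 3 * cos τ),
    sin (π / 3 + τ) / (Real.sqrt 3 * cos τ), by positivity, by positivity, ?_, ?_, ?_⟩
  · rw [Real.sin_sub, Real.sin_add, Real.sin_pi_div_three, Real.cos_pi_div_three]
    field_simp; ring
  · intro φ
    simp only [Real.sin_sub, Real.sin_add, Real.sin_pi_div_three, Real.cos_pi_div_three]
    field_simp; ring_nf
  · intro φ
    simp only [Real.sin_sub, Real.sin_add, Real.sin_pi_div_three, Real.cos_pi_div_three]
    field_simp; ring_nf

structure Sys (F : ℝ → ℝ → ℝ) (N : ℝ → ℝ → ℕ) (vtx : ℝ → Prop) (Rad : ℝ → ℝ → Prop) : Prop where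
  split : ∀ a t b, a ≤ t → t ≤ b → F a b ≤ F a t + F t b
  Nadd : ∀ a t b, a ≤ t → t ≤ b → b ≤ a + 2 * π → N a t + N t b ≤ N a b
  Nvtx : ∀ a t b, a < t → t < b → b ≤ a + 2 * π → vtx t → N a t + N t b + 1 ≤ N a b
  Nex : ∀ a b, N a b ≠ 0 → ∃ t, a < t ∧ t < b ∧ vtx t
  tri : ∀ a b Ra Rb, a ≤ b → N a b = 0 → Rad a Ra → Rad b Rb → 0 ≤ Ra → 0 ≤ Rb →
    b - a < π ∧ F a b ≤ Ra * Rb * sin (b - a) / 2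
  rad1 : ∀ a, Rad a 1

structure Spec (F : ℝ → ℝ → ℝ) (Rad : ℝ → ℝ → Prop) (α : ℝ) : Prop where
  rad : ∀ t, |t - α| < π / 3 → Rad t (1 / (2 * cos (t - α)))
  FS : F (α - π / 3) (α + π / 3) ≤ lam

section
variable {F : ℝ → ℝ → ℝ} {N : ℝ → ℝ → ℕ} {vtx : ℝ → Prop} {Rad : ℝ → ℝ → Prop}

lemma Sys.G (h : Sys F N vtx Rad) : ∀ (n : ℕ) (a b : ℝ), a ≤ b → b ≤ a + 2 * π → N a b ≤ n →
    F a b ≤ cc * (1 + N a b) + lam * (b - a) := by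
  intro n
  induction n with
  | zero =>
    intro a b hab _ hn
    have hn0 : N a b = 0 := by omega
    have := (h.tri a b 1 1 hab hn0 (h.rad1 _) (h.rad1 _) zero_le_one zero_le_one).2
    have := sin_le0 (d := b - a) (by linarith)
    rw [hn0]; push_cast; linarith
  | succ n ih =>
    intro a b hab hb hn
    by_cases hn0 : N a b = 0
    · exact ih a b hab hb (by omega)
    · obtain ⟨t, h1, h2, h3⟩ := h.Nex a b hn0
      have h4 := h.Nvtx a t b h1 h2 hb h3
      have h5 := ih a t h1.le (by linarith) (by omega)
      have h6 := ih t b h2.le (by linarith) (by omega)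
      have h7 := h.split a t b h1.le h2.le
      have h8 : (N a t : ℝ) + N t b + 1 ≤ N a b := by exact_mod_cast h4
      nlinarith [cc_lb]

lemma Sys.S (h : Sys F N vtx Rad) {α : ℝ} (hα : Spec F Rad α) :
    ∀ (n : ℕ) (a b : ℝ), a ≤ α - π / 3 → α + π / 3 ≤ b → b ≤ a + 2 * π → N a b ≤ n →
    F a b ≤ cc * N a b + lam * (1 + (b - a) - 2 * π / 3) := by
  have hpi := Real.pi_pos
  have hcc := cc_lb
  intro n
  induction n with
  | zero =>
    intro a b ha hb _ hn
    have hn0 : N a b = 0 := by omega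
    have := (h.tri a b 1 1 (by linarith) hn0 (h.rad1 _) (h.rad1 _) zero_le_one zero_le_one).2
    have := sin_le1 (d := b - a) (by linarith)
    rw [hn0]; push_cast; linarith
  | succ n ih =>
    intro a b ha hb hab hn
    by_cases hL : ∃ t, a < t ∧ t ≤ α - π / 3 ∧ vtx t
    · obtain ⟨t, h1, h2, h3⟩ := hL
      have h4 := h.Nvtx a t b h1 (by linarith) hab h3
      have h5 := h.G _ a t h1.le (by linarith) le_rfl
      have h6 := ih t b h2 hb (by linarith) (by omega)
      have h7 := h.split a t b h1.le (by linarith)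
      have h8 : (N a t : ℝ) + N t b + 1 ≤ N a b := by exact_mod_cast h4
      nlinarith
    by_cases hR : ∃ t, α + π / 3 ≤ t ∧ t < b ∧ vtx t
    · obtain ⟨t, h1, h2, h3⟩ := hR
      have h4 := h.Nvtx a t b (by linarith) h2 hab h3
      have h5 := h.G _ t b h2.le (by linarith) le_rfl
      have h6 := ih a t ha h1 (by linarith) (by omega)
      have h7 := h.split a t b (by linarith) h2.le
      have h8 : (N a t : ℝ) + N t b + 1 ≤ N a b := by exact_mod_cast h4
      nlinarith
    by_cases hn0 : N a b = 0
    · exact ih a b ha hb hab (by omega)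
    push Not at hL hR
    have hL0 : N a (α - π / 3) = 0 := by
      by_contra hne
      obtain ⟨t, h1, h2, h3⟩ := h.Nex _ _ hne
      exact hL t h1 h2.le h3
    have hR0 : N (α + π / 3) b = 0 := by
      by_contra hne
      obtain ⟨t, h1, h2, h3⟩ := h.Nex _ _ hne
      exact hR t h1.le h2 h3
    by_cases h2 : 2 ≤ N a b
    · have h3 := h.G _ a (α - π / 3) ha (by linarith) le_rfl
      have h4 := h.G _ (α + π / 3) b hb (by linarith) le_rfl
      have h5 := h.split a (α - π / 3) b ha (by linarith)
      have h6 := h.split (α - π / 3) (α + π / 3) b (by linarith) hb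
      have h7 := hα.FS
      have h8 : (2 : ℝ) ≤ N a b := by exact_mod_cast h2
      rw [hL0] at h3; rw [hR0] at h4
      push_cast at h3 h4
      nlinarith
    · have hn1 : N a b = 1 := by omega
      obtain ⟨t, h1, h2, h3⟩ := h.Nex a b hn0
      have h4 := h.Nvtx a t b h1 h2 hab h3
      have ht1 : α - π / 3 < t := by
        by_contra hh; exact hL t h1 (not_lt.1 hh) h3
      have ht2 : t < α + π / 3 := by
        by_contra hh; exact hR t (not_lt.1 hh) h2 h3
      have hτ : |t - α| < π / 3 := abs_lt.2 ⟨by linarith, by linarith⟩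
      obtain ⟨hr, x, y, hx, hy, hxy, e1, e2⟩ := chord_conv hτ
      have h5 := (h.tri a t 1 _ h1.le (by omega) (h.rad1 _) (hα.rad t hτ) zero_le_one hr).2
      have h6 := (h.tri t b _ 1 h2.le (by omega) (hα.rad t hτ) (h.rad1 _) hr zero_le_one).2
      have h7 := h.split a t b h1.le h2.le
      have e1' := e1 (α - a)
      have e2' := e2 (b - α)
      rw [show α - a + (t - α) = t - a by ring] at e1'
      rw [show b - α - (t - α) = b - t by ring] at e2'
      have g1 := sin_le0 (d := α - a - π / 3) (by linarith)
      have g2 := sin_le1 (d := α - a + π / 3) (by linarith)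
      have g3 := sin_le0 (d := b - α - π / 3) (by linarith)
      have g4 := sin_le1 (d := b - α + π / 3) (by linarith)
      have hyx : y = 1 - x := by linarith
      rw [hn1]; push_cast
      have k1 : sin (α - a - π / 3) / 2 + sin (b - α + π / 3) / 2 ≤
          cc * 1 + lam * (1 + (b - a) - 2 * π / 3) := by linarith
      have k2 : sin (α - a + π / 3) / 2 + sin (b - α - π / 3) / 2 ≤
          cc * 1 + lam * (1 + (b - a) - 2 * π / 3) := by linarith
      have m1 := mul_le_mul_of_nonneg_left k1 hx
      have m2 := mul_le_mul_of_nonneg_left k2 hy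
      have m3 : (x + y) * (cc * 1 + lam * (1 + (b - a) - 2 * π / 3)) =
        cc * 1 + lam * (1 + (b - a) - 2 * π / 3) := by rw [hxy, one_mul]
      linarith

set_option maxHeartbeats 2000000 in
lemma Sys.SS (h : Sys F N vtx Rad) {α β : ℝ} (hα : Spec F Rad α) (hβ : Spec F Rad β)
    (hαβ : α + 2 * π / 3 ≤ β) :
    ∀ (n : ℕ) (a b : ℝ), a ≤ α - π / 3 → β + π / 3 ≤ b → b ≤ a + 2 * π → N a b ≤ n →
    F a b ≤ cc * ((N a b : ℝ) - 1) + lam * (2 + (b - a) - 4 * π / 3) := by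
  have hpi := Real.pi_pos
  have hcc := cc_lb
  have hlam := lam_lb
  intro n
  induction n with
  | zero =>
    intro a b ha hb _ hn
    have hn0 : N a b = 0 := by omega
    have := (h.tri a b 1 1 (by linarith) hn0 (h.rad1 _) (h.rad1 _) zero_le_one zero_le_one).1
    linarith
  | succ n ih =>
    intro a b ha hb hab hn
    by_cases hL : ∃ t, a < t ∧ t ≤ α - π / 3 ∧ vtx t
    · obtain ⟨t, h1, h2, h3⟩ := hL
      have h4 := h.Nvtx a t b h1 (by linarith) hab h3
      have h5 := h.G _ a t h1.le (by linarith) le_rfl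
      have h6 := ih t b h2 hb (by linarith) (by omega)
      have h7 := h.split a t b h1.le (by linarith)
      have h8 : (N a t : ℝ) + N t b + 1 ≤ N a b := by exact_mod_cast h4
      nlinarith
    by_cases hR : ∃ t, β + π / 3 ≤ t ∧ t < b ∧ vtx t
    · obtain ⟨t, h1, h2, h3⟩ := hR
      have h4 := h.Nvtx a t b (by linarith) h2 hab h3
      have h5 := h.G _ t b h2.le (by linarith) le_rfl
      have h6 := ih a t ha h1 (by linarith) (by omega)
      have h7 := h.split a t b (by linarith) h2.le
      have h8 : (N a t : ℝ) + N t b + 1 ≤ N a b := by exact_mod_cast h4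
      nlinarith
    by_cases hM : ∃ t, α + π / 3 ≤ t ∧ t ≤ β - π / 3 ∧ vtx t
    · obtain ⟨t, h1, h2, h3⟩ := hM
      have h4 := h.Nvtx a t b (by linarith) (by linarith) hab h3
      have h5 := h.S hα _ a t (by linarith) (by linarith) (by linarith) le_rfl
      have h6 := h.S hβ _ t b (by linarith) (by linarith) (by linarith) le_rfl
      have h7 := h.split a t b (by linarith) (by linarith)
      have h8 : (N a t : ℝ) + N t b + 1 ≤ N a b := by exact_mod_cast h4
      nlinarith
    by_cases hn0 : N a b = 0
    · exact ih a b ha hb hab (by omega)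
    push Not at hL hR hM
    have hL0 : N a (α - π / 3) = 0 := by
      by_contra hne
      obtain ⟨t, h1, h2, h3⟩ := h.Nex _ _ hne
      exact hL t h1 h2.le h3
    have hR0 : N (β + π / 3) b = 0 := by
      by_contra hne
      obtain ⟨t, h1, h2, h3⟩ := h.Nex _ _ hne
      exact hR t h1.le h2 h3
    have hM0 : N (α + π / 3) (β - π / 3) = 0 := by
      by_contra hne
      obtain ⟨t, h1, h2, h3⟩ := h.Nex _ _ hne
      exact hM t h1.le h2.le h3
    -- two vertices in the first special sector
    by_cases hs : 2 + N (α + π / 3) b ≤ N a b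
    · have h3 := h.G _ a (α - π / 3) ha (by linarith) le_rfl
      have h4 := h.S hβ _ (α + π / 3) b (by linarith) hb (by linarith) le_rfl
      have h5 := h.split a (α - π / 3) b ha (by linarith)
      have h6 := h.split (α - π / 3) (α + π / 3) b (by linarith) (by linarith)
      have h7 := hα.FS
      have h8 : 2 + (N (α + π / 3) b : ℝ) ≤ N a b := by exact_mod_cast hs
      rw [hL0] at h3
      push_cast at h3
      nlinarith
    by_cases ht : 2 + N a (β - π / 3) ≤ N a b
    · have h3 := h.G _ (β + π / 3) b hb (by linarith) le_rfl
      have h4 := h.S hα _ a (β - π / 3) (by linarith) (by linarith) (by linarith) le_rfl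
      have h5 := h.split a (β - π / 3) b (by linarith) (by linarith)
      have h6 := h.split (β - π / 3) (β + π / 3) b (by linarith) (by linarith)
      have h7 := hβ.FS
      have h8 : 2 + (N a (β - π / 3) : ℝ) ≤ N a b := by exact_mod_cast ht
      rw [hR0] at h3
      push_cast at h3
      nlinarith
    -- location of vertices
    have hloc : ∀ t, a < t → t < b → vtx t → |t - α| < π / 3 ∨ |t - β| < π / 3 := by
      intro t h1 h2 h3
      have k1 : α - π / 3 < t := by
        by_contra hh; exact hL t h1 (not_lt.1 hh) h3
      have k2 : t < β + π / 3 := by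
        by_contra hh; exact hR t (not_lt.1 hh) h2 h3
      by_cases k3 : t < α + π / 3
      · left; exact abs_lt.2 ⟨by linarith, by linarith⟩
      · right
        have k4 : β - π / 3 < t := by
          by_contra hh; exact hM t (not_lt.1 k3) (not_lt.1 hh) h3
        exact abs_lt.2 ⟨by linarith, by linarith⟩
    -- scalar facts
    have one_case : ∀ t, a < t → t < b → N a t = 0 → N t b = 0 → N a b ≠ 0 →
        (|t - α| < π / 3 ∨ |t - β| < π / 3) →
        F a b ≤ cc * ((N a b : ℝ) - 1) + lam * (2 + (b - a) - 4 * π / 3) := by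
      intro t h1 h2 hn1 hn2 hn3 hor
      have hnn : (1 : ℝ) ≤ N a b := by
        exact_mod_cast Nat.one_le_iff_ne_zero.2 hn3
      have h7 := h.split a t b h1.le h2.le
      rcases hor with hτ | hτ
      · obtain ⟨hr, x, y, hx, hy, hxy, e1, e2⟩ := chord_conv hτ
        have h5 := (h.tri a t 1 _ h1.le hn1 (h.rad1 _) (hα.rad t hτ) zero_le_one hr).2
        have h6 := (h.tri t b _ 1 h2.le hn2 (hα.rad t hτ) (h.rad1 _) hr zero_le_one).2
        have e1' := e1 (α - a)
        have e2' := e2 (b - α)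
        rw [show α - a + (t - α) = t - a by ring] at e1'
        rw [show b - α - (t - α) = b - t by ring] at e2'
        have g1 := sin_le0 (d := α - a - π / 3) (by linarith)
        have g2 := sin_le1 (d := α - a + π / 3) (by linarith)
        have g3 := sin_le1 (d := b - α - π / 3) (by linarith)
        have g4 := sin_le2 (d := b - α + π / 3) (by linarith) (by linarith)
        have k1 : sin (α - a - π / 3) / 2 + sin (b - α + π / 3) / 2 ≤
            lam * (2 + (b - a) - 4 * π / 3) := by linarith
        have k2 : sin (α - a + π / 3) / 2 + sin (b - α - π / 3) / 2 ≤
            lam * (2 + (b - a) - 4 * π / 3) := by linarith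
        have m1 := mul_le_mul_of_nonneg_left k1 hx
        have m2 := mul_le_mul_of_nonneg_left k2 hy
        have m3 : (x + y) * (lam * (2 + (b - a) - 4 * π / 3)) =
          lam * (2 + (b - a) - 4 * π / 3) := by rw [hxy, one_mul]
        nlinarith
      · obtain ⟨hr, x, y, hx, hy, hxy, e1, e2⟩ := chord_conv hτ
        have h5 := (h.tri a t 1 _ h1.le hn1 (h.rad1 _) (hβ.rad t hτ) zero_le_one hr).2
        have h6 := (h.tri t b _ 1 h2.le hn2 (hβ.rad t hτ) (h.rad1 _) hr zero_le_one).2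
        have e1' := e1 (β - a)
        have e2' := e2 (b - β)
        rw [show β - a + (t - β) = t - a by ring] at e1'
        rw [show b - β - (t - β) = b - t by ring] at e2'
        have g1 := sin_le1 (d := β - a - π / 3) (by linarith)
        have g2 := sin_le2 (d := β - a + π / 3) (by linarith) (by linarith)
        have g3 := sin_le0 (d := b - β - π / 3) (by linarith)
        have g4 := sin_le1 (d := b - β + π / 3) (by linarith)
        have k1 : sin (β - a - π / 3) / 2 + sin (b - β + π / 3) / 2 ≤
            lam * (2 + (b - a) - 4 * π / 3) := by linarith
        have k2 : sin (β - a + π / 3) / 2 + sin (b - β - π / 3) / 2 ≤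
            lam * (2 + (b - a) - 4 * π / 3) := by linarith
        have m1 := mul_le_mul_of_nonneg_left k1 hx
        have m2 := mul_le_mul_of_nonneg_left k2 hy
        have m3 : (x + y) * (lam * (2 + (b - a) - 4 * π / 3)) =
          lam * (2 + (b - a) - 4 * π / 3) := by rw [hxy, one_mul]
        nlinarith
    have two_case : ∀ t s, a < t → t < s → s < b → N a t = 0 → N t s = 0 → N s b = 0 →
        2 ≤ N a b → |t - α| < π / 3 → |s - β| < π / 3 →
        F a b ≤ cc * ((N a b : ℝ) - 1) + lam * (2 + (b - a) - 4 * π / 3) := by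
      intro t s h1 hts h2 hn1 hn2 hn3 hn4 hτ hσ
      have hnn : (2 : ℝ) ≤ N a b := by exact_mod_cast hn4
      have h7 := h.split a t b h1.le (by linarith)
      have h8 := h.split t s b hts.le h2.le
      obtain ⟨hr, x, y, hx, hy, hxy, e1, e2⟩ := chord_conv hτ
      obtain ⟨hr', x', y', hx', hy', hxy', e1', e2'⟩ := chord_conv hσ
      have f1 := (h.tri a t 1 _ h1.le hn1 (h.rad1 _) (hα.rad t hτ) zero_le_one hr).2
      have f2 := (h.tri t s _ _ hts.le hn2 (hα.rad t hτ) (hβ.rad s hσ) hr hr').2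
      have f3 := (h.tri s b _ 1 h2.le hn3 (hβ.rad s hσ) (h.rad1 _) hr' zero_le_one).2
      have i1 := e1 (α - a)
      rw [show α - a + (t - α) = t - a by ring] at i1
      have i2 := e2' (b - β)
      rw [show b - β - (s - β) = b - s by ring] at i2
      have i3 := e1' (β - t)
      rw [show β - t + (s - β) = s - t by ring] at i3
      have i4 := e2 (β - π / 3 - α)
      rw [show β - π / 3 - α - (t - α) = β - t - π / 3 by ring,
        show β - π / 3 - α + π / 3 = β - α by ring,
        show β - π / 3 - α - π / 3 = β - α - 2 * π / 3 by ring] at i4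
      have i5 := e2 (β + π / 3 - α)
      rw [show β + π / 3 - α - (t - α) = β - t + π / 3 by ring,
        show β + π / 3 - α + π / 3 = β - α + 2 * π / 3 by ring,
        show β + π / 3 - α - π / 3 = β - α by ring] at i5
      have i6 : 1 / (2 * cos (t - α)) * (1 / (2 * cos (s - β))) * sin (s - t) =
          x' * (x * sin (β - α) + y * sin (β - α - 2 * π / 3)) +
          y' * (x * sin (β - α + 2 * π / 3) + y * sin (β - α)) := by
        rw [← i4, ← i5, mul_assoc, i3]; ring
      set T := cc + lam * (2 + (b - a) - 4 * π / 3) with hT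
      have g1 := sin_le0 (d := α - a - π / 3) (by linarith)
      have g2 := sin_le1 (d := α - a + π / 3) (by linarith)
      have g3 := sin_le0 (d := b - β - π / 3) (by linarith)
      have g4 := sin_le1 (d := b - β + π / 3) (by linarith)
      have g5 := sin_le1 (d := β - α) (by linarith)
      have g6 := sin_le0 (d := β - α - 2 * π / 3) (by linarith)
      have g7 := sin_le2 (d := β - α + 2 * π / 3) (by linarith) (by linarith)
      -- the four corners
      have c11 : sin (α - a - π / 3) / 2 + sin (β - α) / 2 + sin (b - β + π / 3) / 2 ≤ T := by
        rw [hT]; linarith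
      have c12 : sin (α - a - π / 3) / 2 + sin (β - α + 2 * π / 3) / 2 +
          sin (b - β - π / 3) / 2 ≤ T := by
        rw [hT]; linarith
      have c21 : sin (α - a + π / 3) / 2 + sin (β - α - 2 * π / 3) / 2 +
          sin (b - β + π / 3) / 2 ≤ T := by
        rw [hT]; linarith
      have c22 : sin (α - a + π / 3) / 2 + sin (β - α) / 2 + sin (b - β - π / 3) / 2 ≤ T := by
        rw [hT]; linarith
      have m11 := mul_le_mul_of_nonneg_left c11 (mul_nonneg hx hx')
      have m12 := mul_le_mul_of_nonneg_left c12 (mul_nonneg hx hy')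
      have m21 := mul_le_mul_of_nonneg_left c21 (mul_nonneg hy hx')
      have m22 := mul_le_mul_of_nonneg_left c22 (mul_nonneg hy hy')
      have hfin : F a b ≤ T := by
        have hy1 : y = 1 - x := by linarith
        have hy1' : y' = 1 - x' := by linarith
        subst hy1 hy1'
        rw [one_mul, i1] at f1
        rw [mul_one, i2] at f3
        rw [i6] at f2
        linarith
      nlinarith
    have hA : ∀ t, a < t → t < b → vtx t → |t - α| < π / 3 → N a t = 0 := by
      intro t k1 k2 k3 k4
      have k5 := h.Nvtx a t b k1 k2 hab k3
      have k6 := (abs_lt.1 k4).2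
      have k7 := h.Nadd t (α + π / 3) b (by linarith) (by linarith) (by linarith)
      omega
    have hB : ∀ t, a < t → t < b → vtx t → |t - β| < π / 3 → N t b = 0 := by
      intro t k1 k2 k3 k4
      have k5 := h.Nvtx a t b k1 k2 hab k3
      have k6 := (abs_lt.1 k4).1
      have k7 := h.Nadd a (β - π / 3) t (by linarith) (by linarith) (by linarith)
      omega
    have hA2 : ∀ t r, a < t → t < r → r < b → vtx t → vtx r → |r - α| < π / 3 → False := by
      intro t r k1 k2 k3 k4 k5 k6
      have := hA r (by linarith) k3 k5 k6
      have := h.Nvtx a t r k1 k2 (by linarith) k4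
      omega
    have hB2 : ∀ t r, a < t → t < r → r < b → vtx t → vtx r → |t - β| < π / 3 → False := by
      intro t r k1 k2 k3 k4 k5 k6
      have := hB t k1 (by linarith) k4 k6
      have := h.Nvtx t r b k2 k3 (by linarith) k5
      omega
    by_cases hEa : ∃ t, a < t ∧ t < b ∧ vtx t ∧ |t - α| < π / 3
    · obtain ⟨t, t1, t2, t3, t4⟩ := hEa
      have h4 := h.Nvtx a t b t1 t2 hab t3
      by_cases hEb : ∃ s, a < s ∧ s < b ∧ vtx s ∧ |s - β| < π / 3
      · obtain ⟨s, s1, s2, s3, s4⟩ := hEb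
        have hts : t < s := by linarith [(abs_lt.1 t4).2, (abs_lt.1 s4).1]
        have h5 := h.Nvtx t s b hts s2 (by linarith) s3
        refine two_case t s t1 hts s2 (hA t t1 t2 t3 t4) ?_ (hB s s1 s2 s3 s4) (by omega) t4 s4
        by_contra hne
        obtain ⟨r, r1, r2, r3⟩ := h.Nex t s hne
        rcases hloc r (by linarith) (by linarith) r3 with r4 | r4
        · exact hA2 t r t1 r1 (by linarith) t3 r3 r4
        · exact hB2 r s (by linarith) r2 s2 r3 s3 r4
      · refine one_case t t1 t2 (hA t t1 t2 t3 t4) ?_ hn0 (Or.inl t4)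
        by_contra hne
        obtain ⟨r, r1, r2, r3⟩ := h.Nex t b hne
        rcases hloc r (by linarith) (by linarith) r3 with r4 | r4
        · exact hA2 t r t1 r1 (by linarith) t3 r3 r4
        · exact hEb ⟨r, by linarith, r2, r3, r4⟩
    · obtain ⟨s, s1, s2, s3⟩ := h.Nex a b hn0
      have s4 : |s - β| < π / 3 := by
        rcases hloc s s1 s2 s3 with r4 | r4
        · exact absurd ⟨s, s1, s2, s3, r4⟩ hEa
        · exact r4
      refine one_case s s1 s2 ?_ (hB s s1 s2 s3 s4) hn0 (Or.inr s4)
      by_contra hne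
      obtain ⟨r, r1, r2, r3⟩ := h.Nex a s hne
      rcases hloc r (by linarith) (by linarith) r3 with r4 | r4
      · exact hEa ⟨r, r1, by linarith, r3, r4⟩
      · exact hB2 r s r1 r2 s2 r3 s3 r4
end

def ee (θ : ℝ) : Pt := !₂[cos θ, sin θ]
def cross (x y : Pt) : ℝ := x 0 * y 1 - x 1 * y 0

@[simp] lemma ee_zero (θ : ℝ) : (ee θ) 0 = cos θ := rfl
@[simp] lemma ee_one (θ : ℝ) : (ee θ) 1 = sin θ := rfl

lemma pt_ext {x y : Pt} (h0 : x 0 = y 0) (h1 : x 1 = y 1) : x = y := by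
  ext i; fin_cases i <;> assumption

lemma polar (x : Pt) (a : ℝ) : ∃ r θ : ℝ, 0 ≤ r ∧ a ≤ θ ∧ θ < a + 2 * π ∧ x = r • ee θ := by
  let z : ℂ := ⟨x 0, x 1⟩
  refine ⟨‖z‖, toIcoMod Real.two_pi_pos a z.arg, norm_nonneg _,
    left_le_toIcoMod _ _ _, toIcoMod_lt_right _ _ _, ?_⟩
  have h : toIcoMod Real.two_pi_pos a z.arg = z.arg - (toIcoDiv Real.two_pi_pos a z.arg) * (2 * π) := by
    rw [toIcoMod]; simp
  apply pt_ext
  · simp only [PiLp.smul_apply, ee_zero, smul_eq_mul]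
    rw [h, Real.cos_sub_int_mul_two_pi, Complex.norm_mul_cos_arg]
  · simp only [PiLp.smul_apply, ee_one, smul_eq_mul]
    rw [h, Real.sin_sub_int_mul_two_pi, Complex.norm_mul_sin_arg]

lemma polar_inj {r s θ φ : ℝ} (hr : 0 < r) (hs : 0 < s) (h : r • ee θ = s • ee φ)
    (h1 : |θ - φ| < 2 * π) : θ = φ := by
  have h0 : r * cos θ = s * cos φ := by
    have := congrArg (fun z : Pt => z 0) h; simpa using this
  have h2 : r * sin θ = s * sin φ := by
    have := congrArg (fun z : Pt => z 1) h; simpa using this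
  have hrs : r = s := by
    have e1 : r ^ 2 = s ^ 2 := by
      have a1 := Real.sin_sq_add_cos_sq θ
      have a2 := Real.sin_sq_add_cos_sq φ
      calc r ^ 2 = (r * cos θ) ^ 2 + (r * sin θ) ^ 2 := by linear_combination (-r^2) * a1
        _ = (s * cos φ) ^ 2 + (s * sin φ) ^ 2 := by rw [h0, h2]
        _ = s ^ 2 := by linear_combination (s^2) * a2
    exact (pow_left_inj₀ hr.le hs.le (by norm_num)).1 e1
  subst hrs
  have c1 : cos θ = cos φ := mul_left_cancel₀ hr.ne' h0
  have c2 : sin θ = sin φ := mul_left_cancel₀ hr.ne' h2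
  have c3 : cos (θ - φ) = 1 := by
    rw [Real.cos_sub, c1, c2]; nlinarith [Real.sin_sq_add_cos_sq φ]
  have := (Real.cos_eq_one_iff_of_lt_of_lt (x := θ - φ) (abs_lt.1 h1).1 (abs_lt.1 h1).2).1 c3
  linarith

lemma cross_ee_right (a r θ : ℝ) : cross (ee a) (r • ee θ) = r * sin (θ - a) := by
  simp [cross, Real.sin_sub]; ring
lemma cross_ee_left (b r θ : ℝ) : cross (r • ee θ) (ee b) = r * sin (b - θ) := by
  simp [cross, Real.sin_sub]; ring

/-- linear map of the triangle -/
def Ltri (x y : Pt) : ℝ × ℝ →ₗ[ℝ] Pt :=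
  (LinearMap.fst ℝ ℝ ℝ).smulRight x + (LinearMap.snd ℝ ℝ ℝ).smulRight y
def T0 : Set (ℝ × ℝ) := {p | 0 ≤ p.1 ∧ 0 ≤ p.2 ∧ p.1 + p.2 ≤ 1}
def triang (x y : Pt) : Set Pt := Ltri x y '' T0

lemma Ltri_apply (x y : Pt) (p : ℝ × ℝ) : Ltri x y p = p.1 • x + p.2 • y := by
  simp [Ltri]

lemma mem_triang {x y : Pt} {s t : ℝ} (hs : 0 ≤ s) (ht : 0 ≤ t) (hst : s + t ≤ 1) :
    s • x + t • y ∈ triang x y := ⟨(s, t), ⟨hs, ht, hst⟩, Ltri_apply _ _ _⟩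

lemma T0_closed : IsClosed T0 := by
  have : T0 = {p : ℝ × ℝ | 0 ≤ p.1} ∩ ({p | 0 ≤ p.2} ∩ {p | p.1 + p.2 ≤ 1}) := rfl
  rw [this]
  exact (isClosed_le continuous_const continuous_fst).inter
    ((isClosed_le continuous_const continuous_snd).inter
      (isClosed_le (continuous_fst.add continuous_snd) continuous_const))

lemma T0_compact : IsCompact T0 := by
  apply (isCompact_Icc (a := ((0 : ℝ), (0 : ℝ))) (b := (1, 1))).of_isClosed_subset T0_closed
  rintro ⟨p, q⟩ ⟨h1, h2, h3⟩
  simp only at h1 h2 h3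
  exact ⟨⟨h1, h2⟩, ⟨by simp; linarith, by simp; linarith⟩⟩

lemma T0_convex : Convex ℝ T0 := by
  rintro ⟨p, q⟩ ⟨h1, h2, h3⟩ ⟨p', q'⟩ ⟨h1', h2', h3'⟩ a b ha hb hab
  simp only at h1 h2 h3 h1' h2' h3'
  refine ⟨?_, ?_, ?_⟩ <;> simp <;> try positivity
  nlinarith

lemma triang_closed (x y : Pt) : IsClosed (triang x y) :=
  (T0_compact.image (Ltri x y).continuous_of_finiteDimensional).isClosed

lemma triang_convex (x y : Pt) : Convex ℝ (triang x y) := T0_convex.linear_image _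

lemma vol_T0 : volume T0 ≤ ENNReal.ofReal (1 / 2) := by
  have hm : MeasurableSet T0 := T0_closed.measurableSet
  rw [Measure.volume_eq_prod, Measure.prod_apply hm]
  have : ∀ x : ℝ, volume (Prod.mk x ⁻¹' T0) ≤
      (Set.Icc (0:ℝ) 1).indicator (fun x => ENNReal.ofReal (1 - x)) x := by
    intro x
    by_cases hx : x ∈ Set.Icc (0:ℝ) 1
    · rw [Set.indicator_of_mem hx]
      have : Prod.mk x ⁻¹' T0 ⊆ Set.Icc 0 (1 - x) := by
        rintro y ⟨_, h2, h3⟩; simp only at h2 h3; exact ⟨h2, by linarith⟩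
      refine (measure_mono this).trans ?_
      simp
    · rw [Set.indicator_of_notMem hx]
      have : Prod.mk x ⁻¹' T0 = ∅ := by
        ext y
        simp only [Set.mem_preimage, Set.mem_empty_iff_false, iff_false]
        rintro ⟨h1, h2, h3⟩
        simp only at h1 h2 h3
        exact hx ⟨h1, by linarith⟩
      simp [this]
  refine (lintegral_mono this).trans ?_
  rw [lintegral_indicator measurableSet_Icc]
  rw [← ofReal_integral_eq_lintegral_ofReal]
  · apply ENNReal.ofReal_le_ofReal
    rw [integral_Icc_eq_integral_Ioc, ← intervalIntegral.integral_of_le zero_le_one]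
    rw [intervalIntegral.integral_sub (by simp) (by simp)]
    simp; norm_num
  · exact (continuous_const.sub continuous_id).integrableOn_Icc
  · filter_upwards [ae_restrict_mem measurableSet_Icc] with x hx
    simp only [Pi.zero_apply]; linarith [hx.2]

def toPt : ℝ × ℝ ≃ᵐ Pt :=
  (MeasurableEquiv.finTwoArrow (α := ℝ)).symm.trans (MeasurableEquiv.toLp 2 (Fin 2 → ℝ))

lemma toPt_mp : MeasurePreserving (toPt : ℝ × ℝ → Pt) volume volume := by
  have h1 := (volume_preserving_finTwoArrow ℝ).symm
  exact (PiLp.volume_preserving_toLp (Fin 2)).comp h1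

lemma toPt_apply (p : ℝ × ℝ) : toPt p = !₂[p.1, p.2] := by
  apply pt_ext <;> simp [toPt, MeasurableEquiv.finTwoArrow, MeasurableEquiv.piFinTwo]

lemma vol_triang (x y : Pt) : volume (triang x y) ≤ ENNReal.ofReal (|cross x y| / 2) := by
  let A : Matrix (Fin 2) (Fin 2) ℝ := !![x 0, y 0; x 1, y 1]
  let b := (EuclideanSpace.basisFun (Fin 2) ℝ).toBasis
  let M : Pt →ₗ[ℝ] Pt := Matrix.toLin b b A
  have hdet : LinearMap.det M = cross x y := by
    simp only [M, LinearMap.det_toLin, A, Matrix.det_fin_two_of, cross]; ring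
  have hsub : triang x y ⊆ M '' (toPt '' T0) := by
    rintro _ ⟨p, hp, rfl⟩
    refine ⟨toPt p, ⟨p, hp, rfl⟩, ?_⟩
    rw [toPt_apply, Ltri_apply]
    have : (!₂[p.1, p.2] : Pt) = p.1 • b 0 + p.2 • b 1 := by
      apply pt_ext <;> simp [b]
    rw [this, map_add, map_smul, map_smul]
    simp only [M, Matrix.toLin_self, Fin.sum_univ_two]
    apply pt_ext <;> simp [b, A]
  refine (measure_mono hsub).trans ?_
  rw [Measure.addHaar_image_linearMap, hdet, ← toPt_mp.measure_preimage_equiv,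
    Set.preimage_image_eq _ toPt.injective]
  calc ENNReal.ofReal |cross x y| * volume T0
      ≤ ENNReal.ofReal |cross x y| * ENNReal.ofReal (1 / 2) := by gcongr; exact vol_T0
    _ = ENNReal.ofReal (|cross x y| / 2) := by
      rw [← ENNReal.ofReal_mul (abs_nonneg _)]; congr 1; ring


lemma vol_triang_real {S : Set Pt} {x y : Pt} {A : ℝ} (h : S ⊆ triang x y)
    (hA : |cross x y| / 2 ≤ A) : volume.real S ≤ A := by
  have h0 : 0 ≤ A := le_trans (by positivity) hA
  apply ENNReal.toReal_le_of_le_ofReal h0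
  exact (measure_mono h).trans ((vol_triang x y).trans (ENNReal.ofReal_le_ofReal hA))

lemma ext_of_inter {P C : Set Pt} {x : Pt} (hP : Convex ℝ P) (hx : x ∈ (P ∩ C).extremePoints ℝ)
    (hC : C ∈ nhds x) : x ∈ P.extremePoints ℝ := by
  refine ⟨hx.1.1, ?_⟩
  intro y hy z hz hxyz
  have hcont : ∀ w : Pt, Filter.Tendsto (fun t : ℝ => x + t • (w - x)) (nhds 0) (nhds x) := by
    intro w
    have : Continuous (fun t : ℝ => x + t • (w - x)) := by fun_prop
    simpa using this.tendsto 0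
  have h1 := (hcont y).eventually hC
  have h2 := (hcont z).eventually hC
  have h3 : ∀ᶠ t : ℝ in nhdsWithin 0 (Set.Ioi 0), t < 1 ∧ 0 < t ∧
      x + t • (y - x) ∈ C ∧ x + t • (z - x) ∈ C := by
    have k1 : ∀ᶠ t : ℝ in nhdsWithin 0 (Set.Ioi 0), t < 1 :=
      nhdsWithin_le_nhds (eventually_lt_nhds zero_lt_one)
    filter_upwards [k1, self_mem_nhdsWithin, nhdsWithin_le_nhds h1, nhdsWithin_le_nhds h2]
      with t a b c d using ⟨a, b, c, d⟩
  obtain ⟨t, ht1, ht0, hty, htz⟩ := h3.exists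
  have hPy : ∀ w ∈ P, x + t • (w - x) ∈ P := by
    intro w hw
    have := hP hx.1.1 hw (a := 1 - t) (b := t) (by linarith) ht0.le (by ring)
    convert this using 1
    module
  obtain ⟨a, b, ha, hb, hab, hh⟩ := hxyz
  have hseg : x ∈ openSegment ℝ (x + t • (y - x)) (x + t • (z - x)) := by
    refine ⟨a, b, ha, hb, hab, ?_⟩
    have hb' : b = 1 - a := by linarith
    subst hb'
    have : a • (x + t • (y - x)) + (1 - a) • (x + t • (z - x)) =
      (1 - t) • x + t • (a • y + (1 - a) • z) := by module
    rw [this, hh]; module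
  have key := hx.2 ⟨hPy y hy, hty⟩ ⟨hPy z hz, htz⟩ hseg
  have hz0 : t • (y - x) = 0 := by simpa using key
  rcases smul_eq_zero.1 hz0 with h | h
  · exact absurd h ht0.ne'
  · exact sub_eq_zero.1 h

lemma km {P H : Set Pt} (hc : IsCompact P) (hP : Convex ℝ P) (hH : IsClosed H) (hHc : Convex ℝ H)
    (h : P.extremePoints ℝ ⊆ H) : P ⊆ H := by
  rw [← closure_convexHull_extremePoints hc hP]
  exact closure_minimal (convexHull_min h hHc) hH

def Sector (a b : ℝ) : Set Pt := {x | ∃ r θ : ℝ, 0 ≤ r ∧ a ≤ θ ∧ θ ≤ b ∧ x = r • ee θ}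

lemma cross_cont_right (x : Pt) : Continuous (fun y => cross x y) := by
  unfold cross; fun_prop
lemma cross_cont_left (y : Pt) : Continuous (fun x => cross x y) := by
  unfold cross; fun_prop

lemma cross_half_convex (x : Pt) : Convex ℝ {y | 0 ≤ cross x y} := by
  intro y hy z hz a b ha hb hab
  have : cross x (a • y + b • z) = a * cross x y + b * cross x z := by simp [cross]; ring
  simp only [Set.mem_ofPred_eq] at *
  rw [this]; positivity
lemma cross_half_convex' (x : Pt) : Convex ℝ {y | 0 ≤ cross y x} := by
  intro y hy z hz a b ha hb hab
  have : cross (a • y + b • z) x = a * cross y x + b * cross z x := by simp [cross]; ring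
  simp only [Set.mem_ofPred_eq] at *
  rw [this]; positivity
lemma cross_half_convex'' (x : Pt) : Convex ℝ {y | cross x y ≤ 0} := by
  intro y hy z hz a b ha hb hab
  have : cross x (a • y + b • z) = a * cross x y + b * cross x z := by simp [cross]; ring
  simp only [Set.mem_ofPred_eq] at *
  rw [this]; nlinarith

/-- an arc with no vertices is shorter than `π` -/
lemma arc_lt_pi {P : Set Pt} (hc : IsCompact P) (hP : Convex ℝ P) (h0 : 0 ∈ interior P) {a b : ℝ}
    (hno : ∀ r θ : ℝ, 0 < r → a < θ → θ < b → r • ee θ ∉ P.extremePoints ℝ) : b - a < π := by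
  by_contra hcon
  have hsub : P ⊆ {y | cross (ee a) y ≤ 0} := by
    apply km hc hP (isClosed_le (cross_cont_right _) continuous_const) (cross_half_convex'' _)
    intro v hv
    by_contra hneg
    simp only [Set.mem_ofPred_eq, not_le] at hneg
    obtain ⟨r, θ, hr, h1, h2, rfl⟩ := polar v a
    rw [cross_ee_right] at hneg
    have hr0 : 0 < r := lt_of_le_of_ne hr (by rintro rfl; simp at hneg)
    have hs : 0 < sin (θ - a) := by
      by_contra hs
      have := mul_nonpos_of_nonneg_of_nonpos hr (not_lt.1 hs)
      linarith
    have hθ1 : a < θ := by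
      rcases h1.lt_or_eq with h | h
      · exact h
      · subst h; simp at hs
    have hθ2 : θ < a + π := by
      by_contra hh
      have : sin (θ - a - 2 * π) ≤ 0 := Real.sin_nonpos_of_nonpos_of_neg_pi_le
        (by linarith) (by linarith)
      rw [Real.sin_sub_two_pi] at this; linarith
    exact hno r θ hr0 hθ1 (by linarith) hv
  have hcont : Filter.Tendsto (fun t : ℝ => t • ee (a + π / 2)) (nhds 0) (nhds (0 : Pt)) := by
    have : Continuous (fun t : ℝ => t • ee (a + π / 2)) := by fun_prop
    simpa using this.tendsto 0
  have h1 := hcont.eventually (mem_interior_iff_mem_nhds.1 h0)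
  have h2 : ∀ᶠ t : ℝ in nhdsWithin 0 (Set.Ioi 0), 0 < t ∧ t • ee (a + π / 2) ∈ P := by
    filter_upwards [self_mem_nhdsWithin, nhdsWithin_le_nhds h1] with t a b using ⟨a, b⟩
  obtain ⟨t, ht, htP⟩ := h2.exists
  have := hsub htP
  simp only [Set.mem_ofPred_eq, cross_ee_right] at this
  rw [show a + π / 2 - a = π / 2 by ring, Real.sin_pi_div_two] at this
  linarith

lemma arc_tri {P : Set Pt} (hc : IsCompact P) (hP : Convex ℝ P) {a b Ra Rb : ℝ} (hab : a ≤ b)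
    (hpi : b - a < π)
    (hno : ∀ r θ : ℝ, 0 < r → a < θ → θ < b → r • ee θ ∉ P.extremePoints ℝ)
    (ha : ∀ r : ℝ, r • ee a ∈ P → r ≤ Ra) (hb : ∀ r : ℝ, r • ee b ∈ P → r ≤ Rb) (hRa : 0 ≤ Ra)
    (hRb : 0 ≤ Rb) : P ∩ Sector a b ⊆ triang (Ra • ee a) (Rb • ee b) := by
  have hma : ∀ r : ℝ, 0 ≤ r → r • ee a ∈ P → r • ee a ∈ triang (Ra • ee a) (Rb • ee b) := by
    intro r hr h
    have h1 := ha r h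
    have : r • ee a = (r / Ra) • (Ra • ee a) + (0 : ℝ) • (Rb • ee b) := by
      rw [zero_smul, add_zero, smul_smul]
      rcases hRa.eq_or_lt with h2 | h2
      · have : r = 0 := by linarith
        simp [this]
      · rw [div_mul_cancel₀ _ h2.ne']
    rw [this]
    exact mem_triang (by positivity) le_rfl (by rw [add_zero]; exact div_le_one_of_le₀ h1 hRa)
  have hmb : ∀ r : ℝ, 0 ≤ r → r • ee b ∈ P → r • ee b ∈ triang (Ra • ee a) (Rb • ee b) := by
    intro r hr h
    have h1 := hb r h
    have : r • ee b = (0 : ℝ) • (Ra • ee a) + (r / Rb) • (Rb • ee b) := by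
      rw [zero_smul, zero_add, smul_smul]
      rcases hRb.eq_or_lt with h2 | h2
      · have : r = 0 := by linarith
        simp [this]
      · rw [div_mul_cancel₀ _ h2.ne']
    rw [this]
    exact mem_triang le_rfl (by positivity) (by rw [zero_add]; exact div_le_one_of_le₀ h1 hRb)
  rcases hab.eq_or_lt with rfl | hab
  · rintro x ⟨hx, r, θ, hr, h1, h2, rfl⟩
    obtain rfl : θ = a := le_antisymm h2 h1
    exact hma r hr hx
  have hsin : 0 < sin (b - a) := Real.sin_pos_of_pos_of_lt_pi (by linarith) hpi
  set W : Set Pt := {y | 0 ≤ cross (ee a) y} ∩ {y | 0 ≤ cross y (ee b)} with hW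
  have hWc : IsClosed W := (isClosed_le continuous_const (cross_cont_right _)).inter
    (isClosed_le continuous_const (cross_cont_left _))
  have hWconv : Convex ℝ W := (cross_half_convex _).inter (cross_half_convex' _)
  have h1 : P ∩ Sector a b ⊆ P ∩ W := by
    rintro x ⟨hx, r, θ, hr, h1, h2, rfl⟩
    refine ⟨hx, ?_, ?_⟩
    · simp only [Set.mem_ofPred_eq, cross_ee_right]
      exact mul_nonneg hr (Real.sin_nonneg_of_nonneg_of_le_pi (by linarith) (by linarith))
    · simp only [Set.mem_ofPred_eq, cross_ee_left]
      exact mul_nonneg hr (Real.sin_nonneg_of_nonneg_of_le_pi (by linarith) (by linarith))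
  refine h1.trans ?_
  apply km (hc.inter_right hWc) (hP.inter hWconv) (triang_closed _ _) (triang_convex _ _)
  intro x hx
  have hxP := hx.1.1
  have hx1 : 0 ≤ cross (ee a) x := hx.1.2.1
  have hx2 : 0 ≤ cross x (ee b) := hx.1.2.2
  have hid : x = (cross x (ee b) / sin (b - a)) • ee a + (cross (ee a) x / sin (b - a)) • ee b := by
    have hs := hsin.ne'
    have hsc := Real.sin_sub b a
    apply pt_ext
    · simp only [PiLp.add_apply, PiLp.smul_apply, ee_zero, smul_eq_mul, cross, ee_one]
      field_simp
      rw [hsc]; ring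
    · simp only [PiLp.add_apply, PiLp.smul_apply, ee_zero, smul_eq_mul, cross, ee_one]
      field_simp
      rw [hsc]; ring
  rcases hx1.eq_or_lt with h | hx1
  · rw [← h, zero_div, zero_smul, add_zero] at hid
    rw [hid]; rw [hid] at hxP
    exact hma _ (by positivity) hxP
  rcases hx2.eq_or_lt with h | hx2
  · rw [← h, zero_div, zero_smul, zero_add] at hid
    rw [hid]; rw [hid] at hxP
    exact hmb _ (by positivity) hxP
  exfalso
  have hn : W ∈ nhds x := by
    apply Filter.inter_mem
    · filter_upwards [(cross_cont_right (ee a)).continuousAt.eventually (eventually_gt_nhds hx1)]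
        with y hy using hy.le
    · filter_upwards [(cross_cont_left (ee b)).continuousAt.eventually (eventually_gt_nhds hx2)]
        with y hy using hy.le
  have hxe := ext_of_inter hP hx hn
  obtain ⟨r, θ, hr, h1, h2, rfl⟩ := polar x a
  rw [cross_ee_right] at hx1
  rw [cross_ee_left] at hx2
  have hr0 : 0 < r := lt_of_le_of_ne hr (by rintro rfl; simp at hx1)
  have s1 : 0 < sin (θ - a) := pos_of_mul_pos_right hx1 hr
  have s2 : 0 < sin (b - θ) := pos_of_mul_pos_right hx2 hr
  have hθ1 : a < θ := by
    rcases h1.lt_or_eq with h | h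
    · exact h
    · subst h; simp at s1
  have hθ2 : θ < a + π := by
    by_contra hh
    have : sin (θ - a - 2 * π) ≤ 0 := Real.sin_nonpos_of_nonpos_of_neg_pi_le
      (by linarith) (by linarith)
    rw [Real.sin_sub_two_pi] at this; linarith
  have hθ3 : θ < b := by
    by_contra hh
    have : sin (b - θ) ≤ 0 := Real.sin_nonpos_of_nonpos_of_neg_pi_le
      (by linarith) (by linarith)
    linarith
  exact hno r θ hr0 hθ1 hθ3 hxe

def FF (P : Set Pt) (a b : ℝ) : ℝ := volume.real (P ∩ Sector a b)
def VS (P : Set Pt) (a b : ℝ) : Set Pt :=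
  {v | v ∈ P.extremePoints ℝ ∧ ∃ r θ : ℝ, 0 < r ∧ a < θ ∧ θ < b ∧ v = r • ee θ}
def NN (P : Set Pt) (a b : ℝ) : ℕ := (VS P a b).ncard
def VT (P : Set Pt) (t : ℝ) : Prop := ∃ r : ℝ, 0 < r ∧ r • ee t ∈ P.extremePoints ℝ
def RR (P : Set Pt) (θ R : ℝ) : Prop := ∀ r : ℝ, r • ee θ ∈ P → r ≤ R

lemma norm_ee (θ : ℝ) : ‖ee θ‖ = 1 := by
  rw [EuclideanSpace.norm_eq, Fin.sum_univ_two]; simp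

lemma sector_split (a t b : ℝ) : Sector a b ⊆ Sector a t ∪ Sector t b := by
  rintro x ⟨r, θ, hr, h1, h2, rfl⟩
  rcases le_total θ t with h | h
  · exact Or.inl ⟨r, θ, hr, h1, h, rfl⟩
  · exact Or.inr ⟨r, θ, hr, h, h2, rfl⟩

lemma FF_split {P : Set Pt} (hc : IsCompact P) (a t b : ℝ) : FF P a b ≤ FF P a t + FF P t b := by
  unfold FF
  have hfin : volume (P ∩ Sector a t ∪ P ∩ Sector t b) ≠ ∞ := by
    refine ne_top_of_le_ne_top hc.measure_lt_top.ne (measure_mono ?_)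
    exact Set.union_subset Set.inter_subset_left Set.inter_subset_left
  have h1 : P ∩ Sector a b ⊆ P ∩ Sector a t ∪ P ∩ Sector t b := by
    rw [← Set.inter_union_distrib_left]
    exact Set.inter_subset_inter_right _ (sector_split a t b)
  exact (measureReal_mono h1 hfin).trans (measureReal_union_le _ _)

lemma VS_disj {P : Set Pt} {a t b : ℝ} (hb : b ≤ a + 2 * π) :
    Disjoint (VS P a t) (VS P t b) := by
  rw [Set.disjoint_left]
  rintro v ⟨_, r, θ, hr, h1, h2, rfl⟩ ⟨_, s, φ, hs, h3, h4, h⟩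
  have := polar_inj hr hs h (by rw [abs_lt]; constructor <;> linarith)
  linarith

lemma VS_finite {P : Set Pt} (hf : (P.extremePoints ℝ).Finite) (a b : ℝ) : (VS P a b).Finite :=
  hf.subset fun _ hv => hv.1

lemma sys_of {P : Set Pt} (hc : IsCompact P) (hP : Convex ℝ P) (hf : (P.extremePoints ℝ).Finite)
    (hball : P ⊆ closedBall 0 1) (h0 : 0 ∈ interior P) : Sys (FF P) (NN P) (VT P) (RR P) where
  split := fun a t b _ _ => FF_split hc a t b
  Nadd := by
    intro a t b h1 h2 h3
    unfold NN
    rw [← Set.ncard_union_eq (VS_disj h3) (VS_finite hf _ _) (VS_finite hf _ _)]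
    apply Set.ncard_le_ncard _ (VS_finite hf _ _)
    rintro v (⟨hv, r, θ, hr, h4, h5, rfl⟩ | ⟨hv, r, θ, hr, h4, h5, rfl⟩)
    · exact ⟨hv, r, θ, hr, h4, by linarith, rfl⟩
    · exact ⟨hv, r, θ, hr, by linarith, h5, rfl⟩
  Nvtx := by
    rintro a t b h1 h2 h3 ⟨r, hr, hv⟩
    unfold NN
    rw [← Set.ncard_union_eq (VS_disj h3) (VS_finite hf _ _) (VS_finite hf _ _)]
    have hn : r • ee t ∉ VS P a t ∪ VS P t b := by
      rintro (⟨_, s, θ, hs, h4, h5, h⟩ | ⟨_, s, θ, hs, h4, h5, h⟩)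
      · have := polar_inj hr hs h (by rw [abs_lt]; constructor <;> linarith)
        linarith
      · have := polar_inj hr hs h (by rw [abs_lt]; constructor <;> linarith)
        linarith
    rw [← Set.ncard_insert_of_notMem hn ((VS_finite hf _ _).union (VS_finite hf _ _))]
    apply Set.ncard_le_ncard _ (VS_finite hf _ _)
    rintro v (rfl | ⟨hv, r, θ, hr, h4, h5, rfl⟩ | ⟨hv, r, θ, hr, h4, h5, rfl⟩)
    · exact ⟨hv, r, t, hr, h1, h2, rfl⟩
    · exact ⟨hv, r, θ, hr, h4, by linarith, rfl⟩
    · exact ⟨hv, r, θ, hr, by linarith, h5, rfl⟩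
  Nex := by
    intro a b h
    obtain ⟨v, hv, r, θ, hr, h1, h2, rfl⟩ := Set.nonempty_of_ncard_ne_zero h
    exact ⟨θ, h1, h2, r, hr, hv⟩
  tri := by
    intro a b Ra Rb hab hN ha hb hRa hRb
    have he : VS P a b = ∅ := (Set.ncard_eq_zero (VS_finite hf _ _)).1 hN
    have hno : ∀ r θ : ℝ, 0 < r → a < θ → θ < b → r • ee θ ∉ P.extremePoints ℝ := by
      intro r θ hr h1 h2 hv
      have : r • ee θ ∈ VS P a b := ⟨hv, r, θ, hr, h1, h2, rfl⟩
      rw [he] at this; exact this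
    have hpi := arc_lt_pi hc hP h0 hno
    refine ⟨hpi, ?_⟩
    apply vol_triang_real (arc_tri hc hP hab hpi hno ha hb hRa hRb)
    have : cross (Ra • ee a) (Rb • ee b) = Ra * Rb * sin (b - a) := by
      simp [cross, Real.sin_sub]; ring
    rw [this, abs_of_nonneg]
    exact mul_nonneg (by positivity) (Real.sin_nonneg_of_nonneg_of_le_pi (by linarith) hpi.le)
  rad1 := by
    intro a r hr
    have := hball hr
    rw [mem_closedBall_zero_iff, norm_smul, norm_ee, mul_one] at this
    exact (le_abs_self r).trans this

lemma spec_of {P : Set Pt} {α : ℝ}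
    (hu : ∀ x ∈ P, x 0 * cos α + x 1 * sin α ≤ 1 / 2) : Spec (FF P) (RR P) α where
  rad := by
    intro t ht r hr
    have h1 := hu _ hr
    simp only [PiLp.smul_apply, ee_zero, ee_one, smul_eq_mul] at h1
    have hcos : 0 < cos (t - α) := by
      rw [abs_lt] at ht
      exact Real.cos_pos_of_mem_Ioo ⟨by linarith [Real.pi_pos], by linarith [Real.pi_pos]⟩
    rw [le_div_iff₀ (by positivity)]
    rw [Real.cos_sub]; linarith
  FS := by
    unfold FF
    apply vol_triang_real (x := ee (α - π / 3)) (y := ee (α + π / 3))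
    · rintro x ⟨hx, r, θ, hr, h1, h2, rfl⟩
      have h3 := hu _ hx
      simp only [PiLp.smul_apply, ee_zero, ee_one, smul_eq_mul] at h3
      have hcs : r * cos (θ - α) ≤ 1 / 2 := by rw [Real.cos_sub]; linarith
      have hs3 := sqrt3_sq
      have hp : (0:ℝ) < √3 := by positivity
      have : r • ee θ = (r * sin (α + π / 3 - θ) / (√3 / 2)) • ee (α - π / 3) +
          (r * sin (θ - (α - π / 3)) / (√3 / 2)) • ee (α + π / 3) := by
        have e1 : sin (α + π / 3 - θ) = sin α * cos θ * (1/2) + cos α * cos θ * (√3/2)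
            - (cos α * (1/2) - sin α * (√3/2)) * sin θ := by
          rw [Real.sin_sub, Real.sin_add, Real.cos_add, Real.sin_pi_div_three,
            Real.cos_pi_div_three]; ring
        have e2 : sin (θ - (α - π / 3)) = sin θ * (cos α * (1/2) + sin α * (√3/2))
            - cos θ * (sin α * (1/2) - cos α * (√3/2)) := by
          rw [Real.sin_sub, Real.sin_sub, Real.cos_sub, Real.sin_pi_div_three,
            Real.cos_pi_div_three]
        have hsc := Real.sin_sq_add_cos_sq α
        apply pt_ext
        · simp only [PiLp.add_apply, PiLp.smul_apply, ee_zero, ee_one, smul_eq_mul, e1, e2,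
            Real.cos_sub, Real.cos_add, Real.sin_pi_div_three, Real.cos_pi_div_three]
          field_simp
          linear_combination (-2 * √3 * r * cos θ) * hsc
        · simp only [PiLp.add_apply, PiLp.smul_apply, ee_zero, ee_one, smul_eq_mul, e1, e2,
            Real.sin_sub, Real.sin_add, Real.sin_pi_div_three, Real.cos_pi_div_three]
          field_simp
          linear_combination (-2 * √3 * r * sin θ) * hsc
      rw [this]
      have hpi := Real.pi_pos
      apply mem_triang
      · have := Real.sin_nonneg_of_nonneg_of_le_pi (x := α + π / 3 - θ) (by linarith) (by linarith)
        positivity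
      · have := Real.sin_nonneg_of_nonneg_of_le_pi (x := θ - (α - π / 3)) (by linarith) (by linarith)
        positivity
      · have e3 : sin (α + π / 3 - θ) + sin (θ - (α - π / 3)) = √3 * cos (θ - α) := by
          rw [show α + π / 3 - θ = π / 3 - (θ - α) by ring,
            show θ - (α - π / 3) = π / 3 + (θ - α) by ring, Real.sin_sub, Real.sin_add,
            Real.sin_pi_div_three]; ring
        rw [← add_div, ← mul_add, e3, div_le_one (by positivity)]
        nlinarith
    · have : cross (ee (α - π / 3)) (ee (α + π / 3)) = sin (2 * π / 3) := by
        rw [show 2 * π / 3 = (α + π / 3) - (α - π / 3) by ring, Real.sin_sub (α + π / 3)]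
        simp [cross]; ring
      rw [this, show 2 * π / 3 = π - π / 3 by ring, Real.sin_pi_sub, Real.sin_pi_div_three,
        abs_of_nonneg (by positivity), lam]
      linarith

lemma sector_full (a : ℝ) : Sector (a - 2 * π) a = Set.univ := by
  rw [Set.eq_univ_iff_forall]
  intro x
  obtain ⟨r, θ, hr, h1, h2, rfl⟩ := polar x (a - 2 * π)
  exact ⟨r, θ, hr, h1, by linarith, rfl⟩

/-- the case of a vertex in the far region -/
lemma area_vtx {P : Set Pt} (hc : IsCompact P) (hP : Convex ℝ P) (hf : (P.extremePoints ℝ).Finite)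
    (hball : P ⊆ closedBall 0 1) (h0 : 0 ∈ interior P) {α β a0 : ℝ}
    (hα : Spec (FF P) (RR P) α) (hβ : Spec (FF P) (RR P) β) (hαβ : α + 2 * π / 3 ≤ β)
    (h1 : β + π / 3 ≤ a0) (h2 : a0 ≤ α + 2 * π - π / 3) (hv : VT P a0) :
    volume.real P ≤ 1 + √3 / 2 + cc * (((P.extremePoints ℝ).ncard : ℝ) - 6) := by
  have hs := sys_of hc hP hf hball h0
  have key := hs.SS hα hβ hαβ _ (a0 - 2 * π) a0 (by linarith) h1 (by linarith) le_rfl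
  have hN : NN P (a0 - 2 * π) a0 + 1 ≤ (P.extremePoints ℝ).ncard := by
    obtain ⟨r, hr, hv⟩ := hv
    have hn : r • ee a0 ∉ VS P (a0 - 2 * π) a0 := by
      rintro ⟨_, s, θ, hs, h4, h5, h⟩
      have := polar_inj hr hs h (by rw [abs_lt]; constructor <;> linarith)
      linarith
    unfold NN
    rw [← Set.ncard_insert_of_notMem hn (VS_finite hf _ _)]
    apply Set.ncard_le_ncard _ hf
    rintro v (rfl | hv')
    · exact hv
    · exact hv'.1
  have hN' : (NN P (a0 - 2 * π) a0 : ℝ) + 1 ≤ ((P.extremePoints ℝ).ncard : ℝ) := by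
    exact_mod_cast hN
  rw [FF, sector_full, Set.inter_univ] at key
  have hcc := cc_lb
  have e : lam * (2 + (a0 - (a0 - 2 * π)) - 4 * π / 3) = √3 / 2 + 1 - 4 * cc := by
    unfold lam cc; ring
  rw [e] at key
  nlinarith

lemma vol_ball_real : volume.real (closedBall (0 : Pt) 1) = π := by
  rw [measureReal_def, EuclideanSpace.volume_closedBall_fin_two]
  simp [Real.pi_pos.le]

lemma area_out {P : Set Pt} (hc : IsCompact P) (hP : Convex ℝ P)
    (hball : P ⊆ closedBall 0 1) (h0 : 0 ∉ interior P) : volume.real P ≤ π / 2 := by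
  obtain ⟨f, hf⟩ := geometric_hahn_banach_open_point hP.interior isOpen_interior h0
  have hvol : volume.real P = volume.real (interior P) := by
    apply le_antisymm
    · have h1 : P ⊆ interior P ∪ frontier P := by
        rw [← closure_eq_interior_union_frontier]; exact subset_closure
      have h2 : volume (frontier P) = 0 := hP.addHaar_frontier _
      rw [measureReal_def, measureReal_def]
      apply ENNReal.toReal_mono
      · exact ne_top_of_le_ne_top hc.measure_lt_top.ne (measure_mono interior_subset)
      · calc volume P ≤ volume (interior P ∪ frontier P) := measure_mono h1
          _ ≤ volume (interior P) + volume (frontier P) := measure_union_le _ _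
          _ = volume (interior P) := by rw [h2, add_zero]
    · exact measureReal_mono interior_subset hc.measure_lt_top.ne
  have hdisj : Disjoint (interior P) (-interior P) := by
    rw [Set.disjoint_left]
    intro x hx hx'
    have := hf x hx
    have h2 := hf _ (Set.mem_neg.1 hx')
    simp at this h2
    linarith
  have hneg : volume.real (-interior P) = volume.real (interior P) := by
    rw [measureReal_def, Measure.measure_neg]; rfl
  have hfin1 : volume (interior P) ≠ ∞ :=
    ne_top_of_le_ne_top hc.measure_lt_top.ne (measure_mono interior_subset)
  have hfin2 : volume (-interior P) ≠ ∞ := by rw [Measure.measure_neg]; exact hfin1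
  have hu := measureReal_union (μ := volume) hdisj isOpen_interior.neg.measurableSet hfin1 hfin2
  have hle : volume.real (interior P ∪ -interior P) ≤ π := by
    rw [← vol_ball_real]
    apply measureReal_mono _ (isCompact_closedBall _ _).measure_lt_top.ne
    apply Set.union_subset (interior_subset.trans hball)
    intro x hx
    have := hball (interior_subset (Set.mem_neg.1 hx))
    simpa using this
  rw [hvol]; linarith

theorem area_lemma {P : Set Pt} (hc : IsCompact P) (hP : Convex ℝ P)
    (hf : (P.extremePoints ℝ).Finite)
    (hball : P ⊆ closedBall 0 1) {α β : ℝ}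
    (hα : ∀ x ∈ P, x 0 * cos α + x 1 * sin α ≤ 1 / 2)
    (hβ : ∀ x ∈ P, x 0 * cos β + x 1 * sin β ≤ 1 / 2)
    (h1 : α + 2 * π / 3 ≤ β) (h2 : β ≤ α + 4 * π / 3) :
    volume.real P ≤ 1 + √3 / 2 + cc * (((P.extremePoints ℝ).ncard : ℝ) - 6) := by
  have hccl := cc_lb
  have hccu := cc_ub
  have hsl := sqrt3_lb
  have hsu := sqrt3_ub
  by_cases h0 : 0 ∈ interior P
  swap
  · have := area_out hc hP hball h0
    have hpi := Real.pi_lt_d2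
    have hk : (0:ℝ) ≤ ((P.extremePoints ℝ).ncard : ℝ) := by positivity
    nlinarith
  have sα := spec_of hα
  have sβ := spec_of hβ
  have sα' : Spec (FF P) (RR P) (α + 2 * π) := by
    apply spec_of
    simpa [Real.cos_add_two_pi, Real.sin_add_two_pi] using hα
  by_cases c1 : ∃ a0, β + π / 3 ≤ a0 ∧ a0 ≤ α + 2 * π - π / 3 ∧ VT P a0
  · obtain ⟨a0, k1, k2, k3⟩ := c1
    exact area_vtx hc hP hf hball h0 sα sβ h1 k1 k2 k3
  by_cases c2 : ∃ a0, α + π / 3 ≤ a0 ∧ a0 ≤ β - π / 3 ∧ VT P a0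
  · obtain ⟨a0, k1, k2, r, hr, k3⟩ := c2
    apply area_vtx (a0 := a0 + 2 * π) hc hP hf hball h0 sβ sα' (by linarith) (by linarith)
      (by linarith)
    refine ⟨r, hr, ?_⟩
    convert k3 using 2
    apply pt_ext <;> simp
  have hs := sys_of hc hP hf hball h0
  have hN1 : NN P (α + π / 3) (β - π / 3) = 0 := by
    by_contra h
    obtain ⟨t, k1, k2, k3⟩ := hs.Nex _ _ h
    exact c2 ⟨t, k1.le, k2.le, k3⟩
  have hN2 : NN P (β + π / 3) (α + 2 * π - π / 3) = 0 := by
    by_contra h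
    obtain ⟨t, k1, k2, k3⟩ := hs.Nex _ _ h
    exact c1 ⟨t, k1.le, k2.le, k3⟩
  have hpi := Real.pi_pos
  obtain ⟨-, t1⟩ := hs.tri _ _ 1 1 (by linarith) hN1 (hs.rad1 _) (hs.rad1 _) zero_le_one zero_le_one
  obtain ⟨-, t2⟩ := hs.tri _ _ 1 1 (by linarith) hN2 (hs.rad1 _) (hs.rad1 _) zero_le_one zero_le_one
  have s1 := FF_split hc (α - π / 3) (α + π / 3) (α + 2 * π - π / 3)
  have s2 := FF_split hc (α + π / 3) (β - π / 3) (α + 2 * π - π / 3)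
  have s3 := FF_split hc (β - π / 3) (β + π / 3) (α + 2 * π - π / 3)
  have f1 := sα.FS
  have f2 := sβ.FS
  have full : FF P (α - π / 3) (α + 2 * π - π / 3) = volume.real P := by
    have := sector_full (α + 2 * π - π / 3)
    rw [show α + 2 * π - π / 3 - 2 * π = α - π / 3 by ring] at this
    rw [FF, this, Set.inter_univ]
  have hsum : sin (β - π / 3 - (α + π / 3)) + sin (α + 2 * π - π / 3 - (β + π / 3)) ≤ √3 := by
    rw [show β - π / 3 - (α + π / 3) = π / 3 + (β - α - π) by ring,
      show α + 2 * π - π / 3 - (β + π / 3) = π / 3 - (β - α - π) by ring,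
      Real.sin_add (π / 3), Real.sin_sub (π / 3), Real.sin_pi_div_three]
    nlinarith [Real.cos_le_one (β - α - π)]
  have hk : (1:ℝ) ≤ ((P.extremePoints ℝ).ncard : ℝ) := by
    have hne : (P.extremePoints ℝ).Nonempty := hc.extremePoints_nonempty ⟨0, interior_subset h0⟩
    exact_mod_cast (Set.ncard_pos hf).2 hne
  unfold lam at f1 f2
  nlinarith

def dp (x y : Pt) : ℝ := x 0 * y 0 + x 1 * y 1
def gf (p x : Pt) : ℝ := dp p p - 2 * dp x p
def Cell (P : Set Pt) (S : Finset Pt) (p : Pt) : Set Pt := {x | x ∈ P ∧ ∀ q ∈ S, gf p x ≤ gf q x}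
def rot (n : Pt) : Pt := !₂[- n 1, n 0]

lemma dp_add (x y z : Pt) : dp (x + y) z = dp x z + dp y z := by simp [dp]; ring
lemma dp_sub (x y z : Pt) : dp (x - y) z = dp x z - dp y z := by simp [dp]; ring
lemma dp_sub' (x y z : Pt) : dp z (x - y) = dp z x - dp z y := by simp [dp]; ring
lemma dp_neg (x z : Pt) : dp (-x) z = - dp x z := by simp [dp]; ring
lemma dp_smul (t : ℝ) (x z : Pt) : dp (t • x) z = t * dp x z := by simp [dp]; ring
lemma dp_comm (x y : Pt) : dp x y = dp y x := by simp [dp]; ring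
lemma dp_cont (z : Pt) : Continuous (fun x => dp x z) := by unfold dp; fun_prop
lemma gf_cont (p : Pt) : Continuous (fun x => gf p x) := by
  unfold gf; exact continuous_const.sub (continuous_const.mul (dp_cont p))
lemma gf_move (p v u : Pt) (t : ℝ) : gf p (v + t • u) = gf p v - 2 * t * dp u p := by
  unfold gf; rw [dp_add, dp_smul]; ring
lemma gf_combo (p x y : Pt) {a b : ℝ} (h : a + b = 1) :
    gf p (a • x + b • y) = a * gf p x + b * gf p y := by
  unfold gf; rw [dp_add, dp_smul, dp_smul]; linear_combination (-(dp p p)) * h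
lemma dp_self_pos {x : Pt} (h : x ≠ 0) : 0 < dp x x := by
  have h1 : 0 ≤ dp x x := by unfold dp; nlinarith [mul_self_nonneg (x 0), mul_self_nonneg (x 1)]
  rcases h1.eq_or_lt with h2 | h2
  · exfalso; apply h
    unfold dp at h2
    have a0 : x 0 = 0 := by nlinarith [mul_self_nonneg (x 0), mul_self_nonneg (x 1)]
    have a1 : x 1 = 0 := by nlinarith [mul_self_nonneg (x 0), mul_self_nonneg (x 1)]
    exact pt_ext (by simpa using a0) (by simpa using a1)
  · exact h2

lemma dist_sq_pt (x p : Pt) : dist x p ^ 2 = dp x x + gf p x := by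
  rw [EuclideanSpace.dist_eq, Real.sq_sqrt (by positivity), Fin.sum_univ_two, Real.dist_eq,
    Real.dist_eq, sq_abs, sq_abs]
  simp only [gf, dp]; ring
lemma dist_le_iff (x p q : Pt) : dist x p ≤ dist x q ↔ gf p x ≤ gf q x := by
  rw [← pow_le_pow_iff_left₀ dist_nonneg dist_nonneg (two_ne_zero), dist_sq_pt, dist_sq_pt]
  constructor <;> intro h <;> linarith

lemma eq_of_dp {n x y : Pt} (hn : n ≠ 0) (h1 : dp x n = dp y n)
    (h2 : dp x (rot n) = dp y (rot n)) : x = y := by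
  have hp := dp_self_pos hn
  unfold dp at *
  simp [rot] at h2
  apply pt_ext
  · apply mul_left_cancel₀ hp.ne'
    linear_combination (n 0) * h1 - (n 1) * h2
  · apply mul_left_cancel₀ hp.ne'
    linear_combination (n 1) * h1 + (n 0) * h2

lemma cell_convex {P : Set Pt} (hP : Convex ℝ P) (S : Finset Pt) (p : Pt) :
    Convex ℝ (Cell P S p) := by
  intro x hx y hy a b ha hb hab
  refine ⟨hP hx.1 hy.1 ha hb hab, ?_⟩
  intro q hq
  rw [gf_combo _ _ _ hab, gf_combo _ _ _ hab]
  have h1 := mul_le_mul_of_nonneg_left (hx.2 q hq) ha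
  have h2 := mul_le_mul_of_nonneg_left (hy.2 q hq) hb
  linarith

lemma cell_compact {P : Set Pt} (hP : IsCompact P) (S : Finset Pt) (p : Pt) :
    IsCompact (Cell P S p) := by
  have : Cell P S p = P ∩ ⋂ q ∈ S, {x | gf p x ≤ gf q x} := by
    ext x; simp [Cell]
  rw [this]
  apply hP.inter_right
  apply isClosed_biInter
  intro q _
  exact isClosed_le (gf_cont p) (gf_cont q)

lemma line_fin {A : Set Pt} {n : Pt} (hn : n ≠ 0) (c : ℝ) (hA : ∀ x ∈ A, dp x n = c)
    (hbt : ∀ x ∈ A, ∀ y ∈ A, ∀ z ∈ A, y ∈ openSegment ℝ x z → x = y) : A.Finite := by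
  by_contra hinf
  have hinj : Set.InjOn (fun x => dp x (rot n)) A := by
    intro x hx y hy h
    exact eq_of_dp hn ((hA x hx).trans (hA y hy).symm) h
  have hinf2 : ((fun x => dp x (rot n)) '' A).Infinite := by
    rw [Set.infinite_image_iff hinj]; exact hinf
  obtain ⟨t, hts, ht⟩ := hinf2.exists_subset_card_eq 3
  let e := t.orderEmbOfFin ht
  have hm : ∀ i, ∃ x ∈ A, dp x (rot n) = e i := fun i => by
    have := hts (t.orderEmbOfFin_mem ht i)
    exact this
  obtain ⟨x, hx, hx'⟩ := hm 0
  obtain ⟨y, hy, hy'⟩ := hm 1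
  obtain ⟨z, hz, hz'⟩ := hm 2
  have l1 : e 0 < e 1 := e.strictMono (by decide)
  have l2 : e 1 < e 2 := e.strictMono (by decide)
  rw [← hx', ← hy'] at l1
  rw [← hz', ← hy'] at l2
  have hd : 0 < dp z (rot n) - dp x (rot n) := by linarith
  have : x = y := by
    apply hbt x hx y hy z hz
    refine ⟨(dp z (rot n) - dp y (rot n)) / (dp z (rot n) - dp x (rot n)),
      (dp y (rot n) - dp x (rot n)) / (dp z (rot n) - dp x (rot n)),
      div_pos (by linarith) hd, div_pos (by linarith) hd, ?_, ?_⟩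
    · rw [← add_div, div_eq_one_iff_eq hd.ne']; ring
    · apply eq_of_dp hn
      · rw [dp_add, dp_smul, dp_smul, hA x hx, hA y hy, hA z hz]
        field_simp; ring
      · rw [dp_add, dp_smul, dp_smul]
        field_simp; ring
  rw [this] at l1
  exact lt_irrefl _ l1

lemma half_fin {K : Set Pt} (hK : Convex ℝ K) (hf : (K.extremePoints ℝ).Finite) {n : Pt}
    (hn : n ≠ 0) (c : ℝ) : ((K ∩ {x | dp x n ≤ c}).extremePoints ℝ).Finite := by
  have h1 : (K ∩ {x | dp x n ≤ c}).extremePoints ℝ ⊆ K.extremePoints ℝ ∪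
      {x | x ∈ (K ∩ {x | dp x n ≤ c}).extremePoints ℝ ∧ dp x n = c} := by
    intro x hx
    by_cases h : dp x n = c
    · exact Or.inr ⟨hx, h⟩
    · left
      apply ext_of_inter hK hx
      have h2 : dp x n < c := lt_of_le_of_ne hx.1.2 h
      filter_upwards [(dp_cont n).continuousAt.eventually (eventually_lt_nhds h2)] with y hy
        using le_of_lt hy
  refine (hf.union ?_).subset h1
  apply line_fin hn c (fun x hx => hx.2)
  intro x hx y hy z hz h
  exact hy.1.2 hx.1.1 hz.1.1 h

lemma cell_fin {P : Set Pt} (hP : Convex ℝ P) (hf : (P.extremePoints ℝ).Finite) (S : Finset Pt)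
    (p : Pt) : ((Cell P S p).extremePoints ℝ).Finite := by
  classical
  induction S using Finset.induction_on with
  | empty =>
    have : Cell P ∅ p = P := by ext x; simp [Cell]
    rw [this]; exact hf
  | insert q S hq ih =>
    by_cases hqp : q = p
    · have : Cell P (insert q S) p = Cell P S p := by
        ext x; simp [Cell, hqp]
      rw [this]; exact ih
    · have : Cell P (insert q S) p = Cell P S p ∩ {x | dp x (q - p) ≤ (dp q q - dp p p) / 2} := by
        ext x
        have e : gf p x ≤ gf q x ↔ dp x (q - p) ≤ (dp q q - dp p p) / 2 := by
          rw [dp_sub']; unfold gf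
          constructor <;> intro h <;> linarith
        simp only [Cell, Finset.forall_mem_insert, Set.mem_inter_iff, Set.mem_ofPred_eq, e]
        tauto
      rw [this]
      exact half_fin (cell_convex hP S p) ih (sub_ne_zero.2 hqp) _

lemma tendsto_move (v u : Pt) :
    Filter.Tendsto (fun t : ℝ => v + t • u) (nhdsWithin 0 (Set.Ioi 0)) (nhds v) := by
  have : Continuous (fun t : ℝ => v + t • u) := by fun_prop
  have h := this.tendsto 0
  simp only [zero_smul, add_zero] at h
  exact h.mono_left nhdsWithin_le_nhds

lemma int_disj {P : Set Pt} {S : Finset Pt} {p q x : Pt} (hp : p ∈ S) (hq : q ∈ S) (hpq : p ≠ q)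
    (hx : x ∈ interior (Cell P S p)) : x ∉ Cell P S q := by
  intro hxq
  have h1 := (tendsto_move x (q - p)).eventually (mem_interior_iff_mem_nhds.1 hx)
  have h2 : ∀ᶠ t : ℝ in nhdsWithin 0 (Set.Ioi 0), 0 < t ∧ x + t • (q - p) ∈ Cell P S p := by
    filter_upwards [self_mem_nhdsWithin, h1] with t a b using ⟨a, b⟩
  obtain ⟨t, ht, hc⟩ := h2.exists
  have h3 := hc.2 q hq
  rw [gf_move, gf_move] at h3
  have h4 := hxq.2 p hp
  have h5 := dp_self_pos (sub_ne_zero.2 hpq.symm)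
  rw [dp_sub' q p] at h5
  nlinarith

lemma generic {U : Set Pt} (v : Pt) (D : Finset Pt) (hU : IsOpen U) (hne : U.Nonempty)
    (hD : ∀ d ∈ D, d ≠ 0) : ∃ w ∈ U, ∀ d ∈ D, dp (w - v) d ≠ 0 := by
  classical
  induction D using Finset.induction_on generalizing U with
  | empty => obtain ⟨w, hw⟩ := hne; exact ⟨w, hw, by simp⟩
  | insert d D hd ih =>
    have hcont : Continuous (fun w => dp (w - v) d) := (dp_cont d).comp (by fun_prop)
    have hopen : IsOpen (U ∩ {w | dp (w - v) d ≠ 0}) :=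
      hU.inter (isOpen_ne_fun hcont continuous_const)
    have hd0 := dp_self_pos (hD d (by simp))
    obtain ⟨w, hw, h⟩ := ih hopen (by
      obtain ⟨w, hw⟩ := hne
      by_cases h0 : dp (w - v) d = 0
      · have h1 := (tendsto_move w d).eventually (hU.mem_nhds hw)
        have h2 : ∀ᶠ t : ℝ in nhdsWithin 0 (Set.Ioi 0), 0 < t ∧ w + t • d ∈ U := by
          filter_upwards [self_mem_nhdsWithin, h1] with t a b using ⟨a, b⟩
        obtain ⟨t, ht, hc⟩ := h2.exists
        refine ⟨w + t • d, hc, ?_⟩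
        have : dp (w + t • d - v) d = t * dp d d := by
          rw [dp_sub, dp_add, dp_smul]; rw [dp_sub] at h0; linarith
        simp only [Set.mem_ofPred_eq, this]
        positivity
      · exact ⟨w, hw, h0⟩) (fun d' hd' => hD d' (by simp [hd']))
    refine ⟨w, hw.1, ?_⟩
    intro d' hd'
    rcases Finset.mem_insert.1 hd' with rfl | h'
    · exact hw.2
    · exact h d' h'

lemma cell_gap {P : Set Pt} {S : Finset Pt} {q q' v : Pt}
    (hv : v ∈ Cell P S q) (h : v ∉ Cell P S q') (hq' : q' ∈ S) : gf q v < gf q' v := by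
  by_contra hcon
  apply h
  exact ⟨hv.1, fun r hr => (not_lt.1 hcon).trans (hv.2 r hr)⟩

lemma cell_eq {P : Set Pt} {S : Finset Pt} {q q' v : Pt}
    (hv : v ∈ Cell P S q) (h : v ∈ Cell P S q') (hq : q ∈ S) (hq' : q' ∈ S) : gf q v = gf q' v :=
  le_antisymm (hv.2 _ hq') (h.2 _ hq)

lemma gap_ev {q q' v u : Pt} (h : gf q v < gf q' v) :
    ∀ᶠ t : ℝ in nhdsWithin 0 (Set.Ioi 0), gf q (v + t • u) < gf q' (v + t • u) := by
  have hopen : IsOpen {x | gf q x < gf q' x} := isOpen_lt (gf_cont q) (gf_cont q')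
  exact (tendsto_move v u).eventually (hopen.mem_nhds h)

lemma move {P : Set Pt} {S : Finset Pt} {q v u : Pt} (hq : q ∈ S) (hv : v ∈ Cell P S q)
    (h : ∀ q' ∈ S, v ∈ Cell P S q' → dp u q' ≤ dp u q) :
    ∀ᶠ t : ℝ in nhdsWithin 0 (Set.Ioi 0), ∀ q' ∈ S, gf q (v + t • u) ≤ gf q' (v + t • u) := by
  rw [Filter.eventually_all_finset]
  intro q' hq'
  by_cases hc : v ∈ Cell P S q'
  · filter_upwards [self_mem_nhdsWithin] with t ht
    have ht : 0 < t := ht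
    rw [gf_move, gf_move, cell_eq hv hc hq hq']
    have := h q' hq' hc
    nlinarith
  · filter_upwards [gap_ev (u := u) (cell_gap hv hc hq')] with t ht using ht.le

lemma move_strict {P : Set Pt} {S : Finset Pt} {q v u : Pt} (hq : q ∈ S) (hv : v ∈ Cell P S q)
    (h : ∀ q' ∈ S, q' ≠ q → v ∈ Cell P S q' → dp u q' < dp u q) :
    ∀ᶠ t : ℝ in nhdsWithin 0 (Set.Ioi 0), ∀ q' ∈ S, q' ≠ q →
      gf q (v + t • u) < gf q' (v + t • u) := by
  rw [Filter.eventually_all_finset]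
  intro q' hq'
  by_cases hc : v ∈ Cell P S q'
  · filter_upwards [self_mem_nhdsWithin] with t ht hne
    have ht : 0 < t := ht
    rw [gf_move, gf_move, cell_eq hv hc hq hq']
    have := h q' hq' hne hc
    nlinarith
  · filter_upwards [gap_ev (u := u) (cell_gap hv hc hq')] with t ht _ using ht

lemma L0 {P : Set Pt} {S : Finset Pt} {q v u : Pt} (hq : q ∈ S) (hv : v ∈ Cell P S q)
    (h : ∀ q' ∈ S, q' ≠ q → v ∈ Cell P S q' → dp u q' < dp u q)
    (hu : ∀ᶠ t : ℝ in nhdsWithin 0 (Set.Ioi 0), v + t • u ∈ interior P) :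
    (interior (Cell P S q)).Nonempty := by
  obtain ⟨t, h1, h2⟩ := ((move_strict hq hv h).and hu).exists
  refine ⟨v + t • u, ?_⟩
  rw [mem_interior_iff_mem_nhds]
  have h3 : ∀ᶠ x in nhds (v + t • u), ∀ q' ∈ S, gf q x ≤ gf q' x := by
    rw [Filter.eventually_all_finset]
    intro q' hq'
    by_cases hqq : q' = q
    · subst hqq; simp
    · have hopen : IsOpen {x | gf q x < gf q' x} := isOpen_lt (gf_cont q) (gf_cont q')
      filter_upwards [hopen.mem_nhds (h1 q' hq' hqq)] with x hx using le_of_lt hx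
  filter_upwards [h3, mem_interior_iff_mem_nhds.1 h2] with x hx hx' using ⟨hx', hx⟩

lemma cell_exists {P : Set Pt} {S : Finset Pt} (hS : S.Nonempty) {v : Pt} (hv : v ∈ P) :
    ∃ q ∈ S, v ∈ Cell P S q := by
  obtain ⟨q, hq, h⟩ := S.exists_min_image (fun q => gf q v) hS
  exact ⟨q, hq, hv, h⟩

lemma L1 {P : Set Pt} (hP : Convex ℝ P) (hint : (interior P).Nonempty) {S : Finset Pt}
    (hS : S.Nonempty) {v z : Pt} (hv : v ∈ P) (hz : z ∈ P) :
    ∃ q ∈ S, v ∈ Cell P S q ∧ (interior (Cell P S q)).Nonempty ∧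
      ∀ q' ∈ S, v ∈ Cell P S q' → dp (z - v) q' ≤ dp (z - v) q := by
  classical
  let D : Finset Pt := ((S ×ˢ S).filter (fun x => x.1 ≠ x.2)).image (fun x => x.1 - x.2)
  obtain ⟨w, hw, hgen⟩ := generic v D isOpen_interior hint (by
    intro d hd
    simp only [D, Finset.mem_image, Finset.mem_filter] at hd
    obtain ⟨x, ⟨_, hx⟩, rfl⟩ := hd
    exact sub_ne_zero.2 hx)
  let T := S.filter (fun q => v ∈ Cell P S q)
  have hT : T.Nonempty := by
    obtain ⟨q, hq, h⟩ := cell_exists hS hv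
    exact ⟨q, by simp [T, hq, h]⟩
  obtain ⟨q0, hq0, hmax⟩ := T.exists_max_image (fun q => dp (z - v) q) hT
  let T1 := T.filter (fun q => dp (z - v) q = dp (z - v) q0)
  obtain ⟨q, hq, hmax1⟩ := T1.exists_max_image (fun q => dp (w - v) q) ⟨q0, by simp [T1, hq0]⟩
  have hq1 : q ∈ T := (Finset.mem_filter.1 hq).1
  have hqe : dp (z - v) q = dp (z - v) q0 := (Finset.mem_filter.1 hq).2
  have hqS : q ∈ S := (Finset.mem_filter.1 hq1).1
  have hqv : v ∈ Cell P S q := (Finset.mem_filter.1 hq1).2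
  refine ⟨q, hqS, hqv, ?_, ?_⟩
  swap
  · intro q' hq' hv'
    rw [hqe]; exact hmax q' (by simp [T, hq', hv'])
  have hev : ∀ᶠ δ : ℝ in nhdsWithin 0 (Set.Ioi 0), ∀ q' ∈ S, q' ≠ q → v ∈ Cell P S q' →
      dp ((z - v) + δ • (w - v)) q' < dp ((z - v) + δ • (w - v)) q := by
    rw [Filter.eventually_all_finset]
    intro q' hq'
    by_cases hv' : v ∈ Cell P S q'
    swap
    · exact Filter.Eventually.of_forall fun _ _ h => absurd h hv'
    by_cases hne : q' = q
    · exact Filter.Eventually.of_forall fun _ h => absurd hne h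
    have hle : dp (z - v) q' ≤ dp (z - v) q := by
      rw [hqe]; exact hmax q' (by simp [T, hq', hv'])
    rcases hle.eq_or_lt with heq | hlt
    · have hm : dp (w - v) q' ≤ dp (w - v) q :=
        hmax1 q' (by simp [T1, T, hq', hv', heq, hqe])
      have hn : dp (w - v) (q' - q) ≠ 0 := by
        apply hgen
        simp only [D, Finset.mem_image, Finset.mem_filter, Finset.mem_product]
        exact ⟨(q', q), ⟨⟨hq', hqS⟩, hne⟩, rfl⟩
      rw [dp_sub'] at hn
      have hm' : dp (w - v) q' < dp (w - v) q := lt_of_le_of_ne hm (fun h => hn (by linarith))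
      filter_upwards [self_mem_nhdsWithin] with δ hδ _ _
      have hδ : 0 < δ := hδ
      rw [dp_add, dp_add, dp_smul, dp_smul, heq]
      nlinarith
    · have hopen : IsOpen {x | dp x q' < dp x q} := isOpen_lt (dp_cont q') (dp_cont q)
      filter_upwards [(tendsto_move (z - v) (w - v)).eventually (hopen.mem_nhds hlt)] with δ h _ _
        using h
  have hposev : ∀ᶠ δ : ℝ in nhdsWithin 0 (Set.Ioi 0), δ ∈ Set.Ioi (0 : ℝ) := self_mem_nhdsWithin
  obtain ⟨δ, hδ, h⟩ := (hposev.and hev).exists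
  have hδ : 0 < δ := hδ
  apply L0 hqS hqv h
  have hsm : ∀ᶠ t : ℝ in nhdsWithin 0 (Set.Ioi 0), t < 1 / (1 + δ) :=
    nhdsWithin_le_nhds (eventually_lt_nhds (by positivity))
  filter_upwards [hsm, self_mem_nhdsWithin] with t ht1 ht
  have ht : 0 < t := ht
  rw [lt_div_iff₀ (by positivity)] at ht1
  have h1 : (1 - t * δ) ≠ 0 := by nlinarith
  have h1' : 0 < (1 - t * δ) := by nlinarith
  have hy : ((1 - t - t * δ) / (1 - t * δ)) • v + (t / (1 - t * δ)) • z ∈ P := by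
    apply hP hv hz (div_nonneg (by nlinarith) h1'.le) (by positivity)
    field_simp; ring
  have := hP.combo_interior_self_mem_interior hw hy (a := t * δ) (b := 1 - t * δ)
    (by positivity) (by nlinarith) (by ring)
  convert this using 1
  have e1 : (1 - t * δ) * ((1 - t - t * δ) / (1 - t * δ)) = 1 - t - t * δ := by field_simp
  have e2 : (1 - t * δ) * (t / (1 - t * δ)) = t := by field_simp
  rw [smul_add (1 - t * δ), smul_smul (1 - t * δ), smul_smul (1 - t * δ), e1, e2]
  module

lemma noext_of_const {P : Set Pt} {S : Finset Pt} {p v u : Pt} (hp : p ∈ S)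
    (hv : v ∈ Cell P S p) (hu : u ≠ 0)
    (hc : ∀ q ∈ S, v ∈ Cell P S q → dp u q = dp u p)
    (h1 : ∀ᶠ t : ℝ in nhdsWithin 0 (Set.Ioi 0), v + t • u ∈ P)
    (h2 : ∀ᶠ t : ℝ in nhdsWithin 0 (Set.Ioi 0), v + t • (-u) ∈ P) :
    v ∉ (Cell P S p).extremePoints ℝ := by
  intro hext
  have m1 := move (u := u) hp hv (fun q hq hq' => (hc q hq hq').le)
  have m2 := move (u := -u) hp hv (fun q hq hq' => by
    rw [dp_neg, dp_neg, hc q hq hq'])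
  have hposev : ∀ᶠ δ : ℝ in nhdsWithin 0 (Set.Ioi 0), δ ∈ Set.Ioi (0 : ℝ) := self_mem_nhdsWithin
  obtain ⟨t, ht, a1, a2, a3, a4⟩ := (hposev.and (m1.and (m2.and (h1.and h2)))).exists
  have ht : 0 < t := ht
  have key := hext.2 (x₁ := v + t • u) ⟨a3, a1⟩ (x₂ := v + t • (-u)) ⟨a4, a2⟩
    ⟨1/2, 1/2, by norm_num, by norm_num, by norm_num, by module⟩
  have : t • u = 0 := by simpa using key
  rcases smul_eq_zero.1 this with h | h
  · exact ht.ne' h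
  · exact hu h

lemma seg_data {a b v : Pt} (h : v ∈ openSegment ℝ a b) :
    ∃ s : ℝ, 0 < s ∧ b = v - s • (a - v) := by
  obtain ⟨α, β, hα, hβ, hab, rfl⟩ := h
  refine ⟨α / β, by positivity, ?_⟩
  have : β • (b - ((α • a + β • b) - (α / β) • (a - (α • a + β • b)))) = 0 := by
    have e : β * (α / β) = α := by field_simp
    obtain rfl : α = 1 - β := by linarith
    rw [smul_sub, smul_sub, smul_smul, e]
    module
  rcases smul_eq_zero.1 this with h | h
  · exact absurd h hβ.ne'
  · exact sub_eq_zero.1 h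

lemma const_of_noext {P : Set Pt} {S : Finset Pt} {q v : Pt} (hq : q ∈ S)
    (hv : v ∈ Cell P S q) (h : v ∉ (Cell P S q).extremePoints ℝ) :
    ∃ (u : Pt) (s : ℝ), u ≠ 0 ∧ 0 < s ∧ v + u ∈ P ∧ v - s • u ∈ P ∧
      ∀ q' ∈ S, v ∈ Cell P S q' → dp u q' = dp u q := by
  have : ∃ a ∈ Cell P S q, ∃ b ∈ Cell P S q, v ∈ openSegment ℝ a b ∧ a ≠ v := by
    by_contra hcon
    push Not at hcon
    exact h ⟨hv, fun a ha b hb hab => hcon a ha b hb hab⟩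
  obtain ⟨a, ha, b, hb, hab, hne⟩ := this
  obtain ⟨s, hs, rfl⟩ := seg_data hab
  refine ⟨a - v, s, sub_ne_zero.2 hne, hs, by simpa using ha.1, hb.1, ?_⟩
  intro q' hq' hv'
  have e := cell_eq hv hv' hq hq'
  have h1 := ha.2 q' hq'
  have h2 := hb.2 q' hq'
  have ea : a = v + (1 : ℝ) • (a - v) := by simp
  rw [ea, gf_move, gf_move] at h1
  rw [show v - s • (a - v) = v + (-s) • (a - v) by module, gf_move, gf_move] at h2
  apply le_antisymm
  · nlinarith
  · by_contra hcon
    nlinarith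

lemma three_of_interior {P : Set Pt} {S : Finset Pt} {p v : Pt} (hvi : v ∈ interior P)
    (hp : p ∈ S) (hv : v ∈ (Cell P S p).extremePoints ℝ) :
    ∃ T : Finset Pt, T ⊆ S ∧ 3 ≤ T.card ∧ ∀ q ∈ T, v ∈ (Cell P S q).extremePoints ℝ ∧
      (interior (Cell P S q)).Nonempty := by
  classical
  have hin : ∀ u : Pt, ∀ᶠ t : ℝ in nhdsWithin 0 (Set.Ioi 0), v + t • u ∈ interior P := fun u =>
    (tendsto_move v u).eventually (isOpen_interior.mem_nhds hvi)
  have hin' : ∀ u : Pt, ∀ᶠ t : ℝ in nhdsWithin 0 (Set.Ioi 0), v + t • u ∈ P := fun u =>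
    (hin u).mono fun t ht => interior_subset ht
  have hnd : ∀ u : Pt, (∀ q ∈ S, v ∈ Cell P S q → dp u q = dp u p) → u = 0 := by
    intro u hu
    by_contra hne
    exact noext_of_const hp hv.1 hne hu (hin' u) (hin' (-u)) hv
  refine ⟨S.filter (fun q => v ∈ Cell P S q), Finset.filter_subset _ _, ?_, ?_⟩
  · by_contra hcard
    set T := S.filter (fun q => v ∈ Cell P S q) with hT
    have hpT : p ∈ T := by simp [hT, hp, hv.1]
    have h1 : (T.erase p).card ≤ 1 := by rw [Finset.card_erase_of_mem hpT]; omega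
    obtain ⟨q, hq⟩ := Finset.card_le_one_iff_subset_singleton.1 h1
    have hq2 : ∀ q' ∈ S, v ∈ Cell P S q' → q' = p ∨ q' = q := by
      intro q' h1 h2
      by_cases h : q' = p
      · exact Or.inl h
      · right
        have : q' ∈ T.erase p := by simp [hT, h, h1, h2]
        simpa using hq this
    by_cases hqp : q = p
    · have := hnd (ee 0) (by
        intro q' h1 h2
        rcases hq2 q' h1 h2 with rfl | rfl
        · rfl
        · rw [hqp])
      have h3 := norm_ee 0
      rw [this] at h3; simp at h3
    · have h0 := hnd (rot (q - p)) (by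
        intro q' h1 h2
        rcases hq2 q' h1 h2 with rfl | rfl
        · rfl
        · simp [dp, rot]; ring)
      apply hqp
      have e0 := congrArg (fun x : Pt => x 0) h0
      have e1 := congrArg (fun x : Pt => x 1) h0
      simp [rot] at e0 e1
      apply pt_ext <;> linarith
  · intro q hq
    obtain ⟨hqS, hqv⟩ := Finset.mem_filter.1 hq
    constructor
    · by_contra hne
      obtain ⟨u, s, hu, _, _, _, hc⟩ := const_of_noext hqS hqv hne
      apply hu
      apply hnd
      intro q' h1 h2
      rw [hc q' h1 h2, hc p hp hv.1]
    · apply L0 (u := q - v) hqS hqv _ (hin _)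
      intro q' h1 h2 h3
      have e := cell_eq hqv h3 hqS h1
      have hd := dp_self_pos (sub_ne_zero.2 h2)
      simp only [gf, dp, PiLp.sub_apply] at *
      nlinarith

lemma support {P : Set Pt} (hP : Convex ℝ P) (hint : (interior P).Nonempty) {v : Pt}
    (hv : v ∉ interior P) : ∃ n : Pt, n ≠ 0 ∧ ∀ x ∈ P, dp x n ≤ dp v n := by
  obtain ⟨f, hf⟩ := geometric_hahn_banach_open_point hP.interior isOpen_interior hv
  let b := EuclideanSpace.basisFun (Fin 2) ℝ
  have hrep : ∀ x : Pt, f x = dp x !₂[f (b 0), f (b 1)] := by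
    intro x
    have : x = x 0 • b 0 + x 1 • b 1 := by apply pt_ext <;> simp [b]
    conv_lhs => rw [this]
    rw [map_add, map_smul, map_smul]
    simp [dp]
  refine ⟨!₂[f (b 0), f (b 1)], ?_, ?_⟩
  · intro h0
    obtain ⟨w, hw⟩ := hint
    have := hf w hw
    have hz : ∀ x, dp x (0 : Pt) = 0 := fun x => by simp [dp]
    rw [hrep w, hrep v, h0, hz, hz] at this
    exact lt_irrefl _ this
  · intro x hx
    rw [← hrep, ← hrep]
    have hx' : x ∈ closure (interior P) := by
      rw [hP.closure_interior_eq_closure_of_nonempty_interior hint]; exact subset_closure hx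
    have hcl : IsClosed {x | f x ≤ f v} := isClosed_le f.continuous continuous_const
    exact closure_minimal (fun y hy => (hf y hy).le) hcl hx'

lemma corner_ext {P : Set Pt} {S : Finset Pt} {q v : Pt} (hv : v ∈ P.extremePoints ℝ)
    (hq : v ∈ Cell P S q) : v ∈ (Cell P S q).extremePoints ℝ :=
  ⟨hq, fun _ ha _ hb hab => hv.2 ha.1 hb.1 hab⟩

lemma par_of_dp {n u w : Pt} (hn : n ≠ 0) (hu : u ≠ 0) (h1 : dp u n = 0) (h2 : dp w n = 0) :
    ∃ c : ℝ, w = c • u := by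
  have hru : dp u (rot n) ≠ 0 := by
    intro h
    apply hu
    apply eq_of_dp hn
    · rw [h1]; simp [dp]
    · rw [h]; simp [dp]
  refine ⟨dp w (rot n) / dp u (rot n), eq_of_dp hn ?_ ?_⟩
  · rw [dp_smul, h1, h2, mul_zero]
  · rw [dp_smul]; field_simp

lemma two_of_boundary {P : Set Pt} (hP : Convex ℝ P) (hint : (interior P).Nonempty)
    {S : Finset Pt} {p v : Pt} (hvi : v ∉ interior P) (hvc : v ∉ P.extremePoints ℝ)
    (hp : p ∈ S) (hv : v ∈ (Cell P S p).extremePoints ℝ) :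
    ∃ T : Finset Pt, T ⊆ S ∧ 2 ≤ T.card ∧ ∀ q ∈ T, v ∈ (Cell P S q).extremePoints ℝ ∧
      (interior (Cell P S q)).Nonempty := by
  classical
  have hvP : v ∈ P := hv.1.1
  obtain ⟨n, hn, hsup⟩ := support hP hint hvi
  have : ∃ a ∈ P, ∃ b ∈ P, v ∈ openSegment ℝ a b ∧ a ≠ v := by
    by_contra hcon
    push Not at hcon
    exact hvc ⟨hvP, fun a ha b hb hab => hcon a ha b hb hab⟩
  obtain ⟨a, ha, b, hb, hab, hne⟩ := this
  obtain ⟨s, hs, hbe⟩ := seg_data hab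
  have hu : a - v ≠ 0 := sub_ne_zero.2 hne
  have hS : S.Nonempty := ⟨p, hp⟩
  obtain ⟨q1, hq1, hv1, hi1, hm1⟩ := L1 hP hint hS hvP ha
  obtain ⟨q2, hq2, hv2, hi2, hm2⟩ := L1 hP hint hS hvP hb
  set u := a - v with hudef
  have hbv : b - v = (-s) • u := by rw [hbe]; module
  have hun : dp u n = 0 := by
    have h1 := hsup a ha
    have h2 := hsup b hb
    have e1 : dp a n = dp v n + dp u n := by rw [hudef, dp_sub]; ring
    have e2 : dp b n = dp v n - s * dp u n := by rw [hbe, dp_sub, dp_smul]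
    nlinarith
  have hm2' : ∀ q' ∈ S, v ∈ Cell P S q' → dp u q2 ≤ dp u q' := by
    intro q' h1 h2
    have := hm2 q' h1 h2
    rw [hbv, dp_smul, dp_smul] at this
    nlinarith
  have hlt : dp u q2 < dp u q1 := by
    by_contra hcon
    push Not at hcon
    have hc : ∀ q ∈ S, v ∈ Cell P S q → dp u q = dp u p := by
      intro q h1 h2
      have k1 := hm1 q h1 h2
      have k2 := hm2' q h1 h2
      have k3 := hm1 p hp hv.1
      have k4 := hm2' p hp hv.1
      linarith
    refine noext_of_const hp hv.1 hu hc ?_ ?_ hv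
    · have hsm : ∀ᶠ t : ℝ in nhdsWithin 0 (Set.Ioi 0), t < 1 :=
        nhdsWithin_le_nhds (eventually_lt_nhds zero_lt_one)
      filter_upwards [hsm, self_mem_nhdsWithin] with t ht1 ht
      have ht : 0 < t := ht
      have := hP hvP ha (a := 1 - t) (b := t) (by linarith) ht.le (by ring)
      convert this using 1
      rw [hudef]; module
    · have hsm : ∀ᶠ t : ℝ in nhdsWithin 0 (Set.Ioi 0), t < s :=
        nhdsWithin_le_nhds (eventually_lt_nhds hs)
      filter_upwards [hsm, self_mem_nhdsWithin] with t ht1 ht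
      have ht : 0 < t := ht
      have := hP hvP hb (a := 1 - t / s) (b := t / s)
        (by rw [sub_nonneg, div_le_one hs]; exact ht1.le) (by positivity) (by ring)
      convert this using 1
      have e : (1 - t / s) • v + (t / s) • b = v + (t / s) • (b - v) := by module
      rw [e, hbv, smul_smul, show t / s * -s = -t by field_simp]; module
  have hext : ∀ q ∈ S, v ∈ Cell P S q → v ∈ (Cell P S q).extremePoints ℝ := by
    intro q hq hvq
    by_contra hno
    obtain ⟨u', s', hu', hs', k1, k2, hc⟩ := const_of_noext hq hvq hno
    have l1 := hsup _ k1
    have l2 := hsup _ k2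
    rw [dp_add] at l1
    rw [dp_sub, dp_smul] at l2
    have l3 : dp u' n = 0 := by nlinarith
    obtain ⟨c, hcu⟩ := par_of_dp hn hu' l3 hun
    have h1 := hc q1 hq1 hv1
    have h2 := hc q2 hq2 hv2
    rw [hcu, dp_smul, dp_smul, h1, h2] at hlt
    exact lt_irrefl _ hlt
  refine ⟨{q1, q2}, ?_, ?_, ?_⟩
  · intro q hq
    simp only [Finset.mem_insert, Finset.mem_singleton] at hq
    rcases hq with rfl | rfl <;> assumption
  · rw [Finset.card_pair]
    rintro rfl; exact lt_irrefl _ hlt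
  · intro q hq
    simp only [Finset.mem_insert, Finset.mem_singleton] at hq
    rcases hq with rfl | rfl
    · exact ⟨hext _ hq1 hv1, hi1⟩
    · exact ⟨hext _ hq2 hv2, hi2⟩

lemma mid_dir {K : Set Pt} (hK : Convex ℝ K) (hint : (interior K).Nonempty) {e lo hi v : Pt}
    (he : e ≠ 0) (hlo : lo ∈ K) (hhi : hi ∈ K) (hv : v ∈ K.extremePoints ℝ)
    (h1 : dp lo e < dp v e) (h2 : dp v e < dp hi e) :
    ∃ c : ℝ, c ≠ 0 ∧ ∀ s : ℝ, 0 < s → s < 1 → v + (s * c) • rot e ∈ interior K := by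
  have hee := dp_self_pos he
  have hd : 0 < dp hi e - dp lo e := by linarith
  set l := (dp v e - dp lo e) / (dp hi e - dp lo e) with hl
  have hl0 : 0 < l := div_pos (by linarith) hd
  have hl1 : l < 1 := by rw [hl, div_lt_one hd]; linarith
  set x := (1 - l) • lo + l • hi with hx
  have hxK : x ∈ K := hK hlo hhi (by linarith) hl0.le (by ring)
  have hxe : dp x e = dp v e := by
    rw [hx, dp_add, dp_smul, dp_smul, hl]; field_simp; ring
  have hrr : dp (rot e) (rot e) = dp e e := by simp [dp, rot]; ring
  have hre : dp (rot e) e = 0 := by simp [dp, rot]; ring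
  have hxv : x - v = (dp (x - v) (rot e) / dp e e) • rot e := by
    apply eq_of_dp he
    · rw [dp_sub, hxe, dp_smul, hre]; ring
    · rw [dp_smul, hrr]; field_simp
  set c := dp (x - v) (rot e) / dp e e with hc
  have hc0 : c ≠ 0 := by
    intro h0
    rw [h0, zero_smul] at hxv
    have hxv' : x = v := sub_eq_zero.1 hxv
    have := hv.2 hlo hhi ⟨1 - l, l, by linarith, hl0, by ring, by rw [← hx, hxv']⟩
    rw [this] at h1; exact lt_irrefl _ h1
  refine ⟨c, hc0, ?_⟩
  intro s hs0 hs1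
  by_contra hy
  set y := v + (s * c) • rot e with hydef
  have hye : y = (1 - s) • v + s • x := by
    rw [hydef, mul_smul, ← hxv]; module
  obtain ⟨n, hn, hsup⟩ := support hK hint hy
  have a1 := hsup v hv.1
  have a2 := hsup x hxK
  have a3 := hsup lo hlo
  have a4 := hsup hi hhi
  have b1 : dp y n = (1 - s) * dp v n + s * dp x n := by rw [hye, dp_add, dp_smul, dp_smul]
  have b2 : dp x n = (1 - l) * dp lo n + l * dp hi n := by rw [hx, dp_add, dp_smul, dp_smul]
  have c1 : dp x n = dp y n := by nlinarith
  have c2 : dp v n = dp y n := by nlinarith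
  have c3 : dp lo n = dp y n := by nlinarith
  have c4 : dp hi n = dp y n := by nlinarith
  have d1 : dp (rot e) n = 0 := by
    have : dp (x - v) n = 0 := by rw [dp_sub, c1, c2, sub_self]
    rw [hxv, dp_smul] at this
    exact (mul_eq_zero.1 this).resolve_left hc0
  have hne : n = (dp n e / dp e e) • e := by
    apply eq_of_dp he
    · rw [dp_smul]; field_simp
    · rw [dp_smul, dp_comm n, d1, dp_comm e (rot e), hre, mul_zero]
  have d2 : dp (hi - lo) n = 0 := by rw [dp_sub, c3, c4, sub_self]
  rw [hne, dp_comm, dp_smul, dp_comm e (hi - lo), dp_sub] at d2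
  rcases mul_eq_zero.1 d2 with h | h
  · rw [h, zero_smul] at hne; exact hn hne
  · exact hd.ne' h

lemma ext_not_interior {P : Set Pt} {v : Pt} (hv : v ∈ P.extremePoints ℝ) : v ∉ interior P := by
  intro hi
  have hP := mem_interior_iff_mem_nhds.1 hi
  have h1 := (tendsto_move v (ee 0)).eventually hP
  have h2 := (tendsto_move v (-ee 0)).eventually hP
  have hposev : ∀ᶠ δ : ℝ in nhdsWithin 0 (Set.Ioi 0), δ ∈ Set.Ioi (0 : ℝ) := self_mem_nhdsWithin
  obtain ⟨t, ht, a3, a4⟩ := (hposev.and (h1.and h2)).exists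
  have ht : 0 < t := ht
  have key := hv.2 (x₁ := v + t • (ee 0)) a3 (x₂ := v + t • (-ee 0)) a4
    ⟨1/2, 1/2, by norm_num, by norm_num, by norm_num, by module⟩
  have h0 : t • ee 0 = 0 := by simpa using key
  rcases smul_eq_zero.1 h0 with h | h
  · exact ht.ne' h
  · have h3 := norm_ee 0
    rw [h] at h3; simp at h3

/-- the direction property of cells -/
def Dir (K : Set Pt) (v e : Pt) (c : ℝ) : Prop :=
  c ≠ 0 ∧ ∀ s : ℝ, 0 < s → s < 1 → v + (s * c) • rot e ∈ interior K

lemma dir_same {P : Set Pt} {S : Finset Pt} {p q v e : Pt} {c c' : ℝ} (hp : p ∈ S) (hq : q ∈ S)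
    (h1 : Dir (Cell P S p) v e c) (h2 : Dir (Cell P S q) v e c') (hcc : 0 < c * c') : p = q := by
  by_contra hne
  have hs : c + c' ≠ 0 := by
    intro h
    have : c' = -c := by linarith
    subst this
    nlinarith [mul_self_nonneg c]
  have hss : 0 < (c + c') * (c + c') := mul_self_pos.2 hs
  have k1 : 0 < c' / (c + c') ∧ c' / (c + c') < 1 := by
    have e1 : c' / (c + c') = (c' * (c + c')) / ((c + c') * (c + c')) := by field_simp
    rw [e1]
    constructor
    · apply div_pos _ hss; nlinarith [mul_self_nonneg c']
    · rw [div_lt_one hss]; nlinarith [mul_self_pos.2 h1.1]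
  have k2 : 0 < c / (c + c') ∧ c / (c + c') < 1 := by
    have e1 : c / (c + c') = (c * (c + c')) / ((c + c') * (c + c')) := by field_simp
    rw [e1]
    constructor
    · apply div_pos _ hss; nlinarith [mul_self_nonneg c]
    · rw [div_lt_one hss]; nlinarith [mul_self_pos.2 h2.1]
  have m1 := h1.2 _ k1.1 k1.2
  have m2 := h2.2 _ k2.1 k2.2
  rw [show c / (c + c') * c' = c' / (c + c') * c by ring] at m2
  exact int_disj hp hq hne m1 (interior_subset m2)

lemma dir_opp {P : Set Pt} (hP : Convex ℝ P) {S : Finset Pt} {p q v e : Pt} {c c' : ℝ}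
    (h1 : Dir (Cell P S p) v e c) (h2 : Dir (Cell P S q) v e c') (hc : 0 < c) (hc' : c' < 0) :
    v ∈ interior P := by
  have m1 := h1.2 (1/2) (by norm_num) (by norm_num)
  have m2 := h2.2 (1/2) (by norm_num) (by norm_num)
  have hsub : ∀ r, Cell P S r ⊆ P := fun r x hx => hx.1
  have n1 := interior_mono (hsub p) m1
  have n2 := interior_mono (hsub q) m2
  have hd : 0 < c - c' := by linarith
  have := hP.interior n1 n2 (a := -c' / (c - c')) (b := c / (c - c'))
    (div_nonneg (by linarith) hd.le) (div_nonneg (by linarith) hd.le)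
    (by field_simp; ring)
  convert this using 1
  rw [smul_add, smul_add, smul_smul, smul_smul]
  have e1 : (-c' / (c - c')) • v + (-c' / (c - c') * (1 / 2 * c)) • rot e +
      ((c / (c - c')) • v + (c / (c - c') * (1 / 2 * c')) • rot e) =
      (-c' / (c - c') + c / (c - c')) • v +
      (-c' / (c - c') * (1 / 2 * c) + c / (c - c') * (1 / 2 * c')) • rot e := by module
  rw [e1, show -c' / (c - c') + c / (c - c') = 1 by field_simp; ring,
    show -c' / (c - c') * (1 / 2 * c) + c / (c - c') * (1 / 2 * c') = 0 by ring]
  simp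

lemma dir_count {P : Set Pt} (hP : Convex ℝ P) {S M : Finset Pt} {v e : Pt} (hM : M ⊆ S)
    (h : ∀ p ∈ M, ∃ c, Dir (Cell P S p) v e c) :
    M.card ≤ 2 ∧ (v ∉ interior P → M.card ≤ 1) := by
  classical
  choose! c hc using h
  have hA : (M.filter (fun p => 0 < c p)).card ≤ 1 := by
    rw [Finset.card_le_one]
    intro a ha b hb
    obtain ⟨ha1, ha2⟩ := Finset.mem_filter.1 ha
    obtain ⟨hb1, hb2⟩ := Finset.mem_filter.1 hb
    exact dir_same (hM ha1) (hM hb1) (hc a ha1) (hc b hb1) (mul_pos ha2 hb2)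
  have hB : (M.filter (fun p => ¬ 0 < c p)).card ≤ 1 := by
    rw [Finset.card_le_one]
    intro a ha b hb
    obtain ⟨ha1, ha2⟩ := Finset.mem_filter.1 ha
    obtain ⟨hb1, hb2⟩ := Finset.mem_filter.1 hb
    have ha3 := lt_of_le_of_ne (not_lt.1 ha2) (hc a ha1).1
    have hb3 := lt_of_le_of_ne (not_lt.1 hb2) (hc b hb1).1
    exact dir_same (hM ha1) (hM hb1) (hc a ha1) (hc b hb1) (mul_pos_of_neg_of_neg ha3 hb3)
  have hsum := Finset.card_filter_add_card_filter_not (s := M) (fun p => 0 < c p)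
  refine ⟨by omega, ?_⟩
  intro hv
  by_contra hcon
  have hA1 : (M.filter (fun p => 0 < c p)).Nonempty := by
    rw [← Finset.card_pos]; omega
  have hB1 : (M.filter (fun p => ¬ 0 < c p)).Nonempty := by
    rw [← Finset.card_pos]; omega
  obtain ⟨a, ha⟩ := hA1
  obtain ⟨b, hb⟩ := hB1
  obtain ⟨ha1, ha2⟩ := Finset.mem_filter.1 ha
  obtain ⟨hb1, hb2⟩ := Finset.mem_filter.1 hb
  have hb3 := lt_of_le_of_ne (not_lt.1 hb2) (hc b hb1).1
  exact hv (dir_opp hP (hc a ha1) (hc b hb1) ha2 hb3)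

open Classical in
def Good (P : Set Pt) (S : Finset Pt) : Finset Pt :=
  S.filter (fun p => (interior (Cell P S p)).Nonempty)

lemma half_closed (e : Pt) (c : ℝ) : IsClosed {x | dp x e ≤ c} :=
  isClosed_le (dp_cont e) continuous_const
lemma half_closed' (e : Pt) (c : ℝ) : IsClosed {x | c ≤ dp x e} :=
  isClosed_le continuous_const (dp_cont e)
lemma half_convex (e : Pt) (c : ℝ) : Convex ℝ {x | dp x e ≤ c} := by
  intro x hx y hy a b ha hb hab
  simp only [Set.mem_ofPred_eq] at *
  rw [dp_add, dp_smul, dp_smul]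
  have h1 := mul_le_mul_of_nonneg_left hx ha
  have h2 := mul_le_mul_of_nonneg_left hy hb
  have h3 : a * c + b * c = c := by rw [← add_mul, hab, one_mul]
  linarith
lemma half_convex' (e : Pt) (c : ℝ) : Convex ℝ {x | c ≤ dp x e} := by
  intro x hx y hy a b ha hb hab
  simp only [Set.mem_ofPred_eq] at *
  rw [dp_add, dp_smul, dp_smul]
  have h1 := mul_le_mul_of_nonneg_left hx ha
  have h2 := mul_le_mul_of_nonneg_left hy hb
  have h3 : a * c + b * c = c := by rw [← add_mul, hab, one_mul]
  linarith

theorem counting {P : Set Pt} (hc : IsCompact P) (hP : Convex ℝ P) (hint : (interior P).Nonempty)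
    (h6 : (P.extremePoints ℝ).ncard = 6) (S : Finset Pt) (hS : S.Nonempty) :
    ∑ p ∈ Good P S, ((Cell P S p).extremePoints ℝ).ncard ≤ 6 * (Good P S).card := by
  classical
  have hf : (P.extremePoints ℝ).Finite := Set.finite_of_ncard_ne_zero (by omega)
  have hfin := cell_fin hP hf S
  let E : Pt → Finset Pt := fun p => (hfin p).toFinset
  have hE : ∀ p v, v ∈ E p ↔ v ∈ (Cell P S p).extremePoints ℝ := fun p v => by simp [E]
  have hEc : ∀ p, ((Cell P S p).extremePoints ℝ).ncard = (E p).card := fun p =>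
    Set.ncard_eq_toFinset_card _ (hfin p)
  set G := Good P S with hG
  have hGS : G ⊆ S := Finset.filter_subset _ _
  have hGi : ∀ p ∈ G, (interior (Cell P S p)).Nonempty := fun p hp => (Finset.mem_filter.1 hp).2
  have hGm : ∀ p ∈ S, (interior (Cell P S p)).Nonempty → p ∈ G := fun p h1 h2 =>
    Finset.mem_filter.2 ⟨h1, h2⟩
  set V := G.biUnion E with hV
  -- the generic direction
  let D : Finset Pt := insert (ee 0) (((V ×ˢ V).filter (fun x => x.1 ≠ x.2)).image
    (fun x => x.1 - x.2))
  obtain ⟨e, -, hgen⟩ := generic 0 D isOpen_univ Set.univ_nonempty (by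
    intro d hd
    simp only [D, Finset.mem_insert, Finset.mem_image, Finset.mem_filter] at hd
    rcases hd with rfl | ⟨x, ⟨_, hx⟩, rfl⟩
    · intro h
      have h3 := norm_ee 0
      rw [h] at h3; simp at h3
    · exact sub_ne_zero.2 hx)
  simp only [sub_zero] at hgen
  have he : e ≠ 0 := by
    rintro rfl
    exact hgen (ee 0) (by simp [D]) (by simp [dp])
  have hinj : ∀ x ∈ V, ∀ y ∈ V, dp x e = dp y e → x = y := by
    intro x hx y hy h
    by_contra hne
    apply hgen (x - y)
    · simp only [D, Finset.mem_insert, Finset.mem_image, Finset.mem_filter, Finset.mem_product]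
      exact Or.inr ⟨(x, y), ⟨⟨hx, hy⟩, hne⟩, rfl⟩
    · rw [dp_comm, dp_sub, h, sub_self]
  -- mid vertices
  let mid : Pt → Pt → Prop := fun p v => v ∈ E p ∧ ∃ lo ∈ E p, ∃ hi ∈ E p,
    dp lo e < dp v e ∧ dp v e < dp hi e
  let d : Pt → ℕ := fun v => (G.filter (fun p => v ∈ E p)).card
  let m : Pt → ℕ := fun v => (G.filter (fun p => mid p v)).card
  have hsumd : ∑ p ∈ G, (E p).card = ∑ v ∈ V, d v := by
    have := Finset.sum_card_bipartiteAbove_eq_sum_card_bipartiteBelow (s := G) (t := V)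
      (fun p v => v ∈ E p)
    simp only [Finset.bipartiteAbove, Finset.bipartiteBelow] at this
    rw [← this]
    apply Finset.sum_congr rfl
    intro p hp
    congr 1
    ext v
    simp only [Finset.mem_filter]
    exact ⟨fun h => ⟨Finset.mem_biUnion.2 ⟨p, hp, h⟩, h⟩, fun h => h.2⟩
  have hsumm : ∑ p ∈ G, ((E p).filter (fun v => mid p v)).card = ∑ v ∈ V, m v := by
    have := Finset.sum_card_bipartiteAbove_eq_sum_card_bipartiteBelow (s := G) (t := V)
      (fun p v => mid p v)
    simp only [Finset.bipartiteAbove, Finset.bipartiteBelow] at this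
    rw [← this]
    apply Finset.sum_congr rfl
    intro p hp
    congr 1
    ext v
    simp only [Finset.mem_filter]
    exact ⟨fun h => ⟨Finset.mem_biUnion.2 ⟨p, hp, h.1⟩, h.2⟩, fun h => ⟨h.2.1, h.2⟩⟩
  have hk : ∀ p ∈ G, (E p).card ≤ ((E p).filter (fun v => mid p v)).card + 2 := by
    intro p hp
    have hne : (E p).Nonempty := by
      obtain ⟨x, hx⟩ := hGi p hp
      obtain ⟨v, hv⟩ := (cell_compact hc S p).extremePoints_nonempty ⟨x, interior_subset hx⟩
      exact ⟨v, (hE p v).2 hv⟩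
    obtain ⟨lo, hlo, hlo'⟩ := (E p).exists_min_image (fun v => dp v e) hne
    obtain ⟨hi, hhi, hhi'⟩ := (E p).exists_max_image (fun v => dp v e) hne
    have hEV : ∀ v ∈ E p, v ∈ V := fun v hv => Finset.mem_biUnion.2 ⟨p, hp, hv⟩
    have hsub : (E p).filter (fun v => ¬ mid p v) ⊆ {lo, hi} := by
      intro v hv
      obtain ⟨hv1, hv2⟩ := Finset.mem_filter.1 hv
      simp only [Finset.mem_insert, Finset.mem_singleton]
      by_contra hcon
      push Not at hcon
      apply hv2
      refine ⟨hv1, lo, hlo, hi, hhi, lt_of_le_of_ne (hlo' v hv1) ?_,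
        lt_of_le_of_ne (hhi' v hv1) ?_⟩
      · intro h; exact hcon.1 (hinj _ (hEV _ hv1) _ (hEV _ hlo) h.symm)
      · intro h; exact hcon.2 (hinj _ (hEV _ hv1) _ (hEV _ hhi) h)
    have h1 := Finset.card_le_card hsub
    have h2 := Finset.card_le_two (a := lo) (b := hi)
    have h3 := Finset.card_filter_add_card_filter_not (s := E p) (fun v => mid p v)
    omega
  have hmdir : ∀ v, ∀ p ∈ G.filter (fun p => mid p v), ∃ c, Dir (Cell P S p) v e c := by
    intro v p hp
    obtain ⟨hp1, hv, lo, hlo, hi, hhi, l1, l2⟩ := Finset.mem_filter.1 hp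
    rw [hE] at hv hlo hhi
    exact mid_dir (cell_convex hP S p) (hGi p hp1) he hlo.1 hhi.1 hv l1 l2
  have hm2 : ∀ v, m v ≤ 2 ∧ (v ∉ interior P → m v ≤ 1) := fun v =>
    dir_count hP ((Finset.filter_subset _ _).trans hGS) (hmdir v)
  have hdT : ∀ v, ∀ T : Finset Pt, T ⊆ S → (∀ q ∈ T, v ∈ (Cell P S q).extremePoints ℝ ∧
      (interior (Cell P S q)).Nonempty) → T.card ≤ d v := by
    intro v T hTS hT
    apply Finset.card_le_card
    intro q hq
    obtain ⟨h1, h2⟩ := hT q hq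
    exact Finset.mem_filter.2 ⟨hGm q (hTS hq) h2, (hE q v).2 h1⟩
  have hd1 : ∀ v ∈ V, 1 ≤ d v := by
    intro v hv
    obtain ⟨p, hp, hvp⟩ := Finset.mem_biUnion.1 hv
    exact Finset.card_pos.2 ⟨p, Finset.mem_filter.2 ⟨hp, hvp⟩⟩
  -- corners
  let X : Finset Pt := hf.toFinset
  have hX : ∀ v, v ∈ X ↔ v ∈ P.extremePoints ℝ := fun v => by simp [X]
  have hX6 : X.card = 6 := by rw [← h6]; exact (Set.ncard_eq_toFinset_card _ hf).symm
  have hXV : X ⊆ V := by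
    intro v hv
    rw [hX] at hv
    obtain ⟨q, hq, hvq, hi, -⟩ := L1 hP hint hS hv.1 hv.1
    exact Finset.mem_biUnion.2 ⟨q, hGm q hq hi, (hE q v).2 (corner_ext hv hvq)⟩
  have hXne : X.Nonempty := by rw [← Finset.card_pos]; omega
  obtain ⟨bot, hbot, hbot'⟩ := X.exists_min_image (fun v => dp v e) hXne
  obtain ⟨top, htop, htop'⟩ := X.exists_max_image (fun v => dp v e) hXne
  have hbP : ∀ x ∈ P, dp bot e ≤ dp x e := fun x hx =>
    km hc hP (half_closed' e _) (half_convex' e _) (fun v hv => hbot' v ((hX v).2 hv)) hx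
  have htP : ∀ x ∈ P, dp x e ≤ dp top e := fun x hx =>
    km hc hP (half_closed e _) (half_convex e _) (fun v hv => htop' v ((hX v).2 hv)) hx
  have hbt : bot ≠ top := by
    intro h
    obtain ⟨w, hw⟩ := hint
    have h1 := (tendsto_move w e).eventually (mem_interior_iff_mem_nhds.1 hw)
    have hposev : ∀ᶠ δ : ℝ in nhdsWithin 0 (Set.Ioi 0), δ ∈ Set.Ioi (0 : ℝ) := self_mem_nhdsWithin
    obtain ⟨t, ht, h2⟩ := (hposev.and h1).exists
    have ht : 0 < t := ht
    have h3 := hbP w (interior_subset hw)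
    have h4 := htP _ h2
    rw [dp_add, dp_smul, ← h] at h4
    have := dp_self_pos he
    nlinarith [mul_pos ht this]
  have hmb : m bot = 0 := by
    rw [Finset.card_eq_zero, Finset.filter_eq_empty_iff]
    rintro p hp ⟨_, lo, hlo, hi, hhi, l1, l2⟩
    have := hbP lo ((hE p lo).1 hlo).1.1
    linarith
  have hmt : m top = 0 := by
    rw [Finset.card_eq_zero, Finset.filter_eq_empty_iff]
    rintro p hp ⟨_, lo, hlo, hi, hhi, l1, l2⟩
    have := htP hi ((hE p hi).1 hhi).1.1
    linarith
  have hw : ∀ v ∈ V, ((if v ∈ X then (-1 : ℤ) else 0) + (if v = bot then 3 else 0)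
      + (if v = top then 3 else 0)) ≤ 2 * (d v : ℤ) - 3 * (m v : ℤ) := by
    intro v hv
    have h1 := hd1 v hv
    obtain ⟨h2, h3⟩ := hm2 v
    by_cases hvb : v = bot
    · subst hvb
      rw [if_pos hbot, if_pos rfl, if_neg hbt, hmb]; push_cast; omega
    by_cases hvt : v = top
    · subst hvt
      rw [if_pos htop, if_neg hbt.symm, if_pos rfl, hmt]; push_cast; omega
    rw [if_neg hvb, if_neg hvt]
    by_cases hvX : v ∈ X
    · have := h3 (ext_not_interior ((hX v).1 hvX))
      rw [if_pos hvX]; omega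
    · rw [if_neg hvX]
      obtain ⟨p, hp, hvp⟩ := Finset.mem_biUnion.1 hv
      rw [hE] at hvp
      by_cases hvi : v ∈ interior P
      · obtain ⟨T, hT1, hT2, hT3⟩ := three_of_interior hvi (hGS hp) hvp
        have := hdT v T hT1 hT3
        omega
      · obtain ⟨T, hT1, hT2, hT3⟩ := two_of_boundary hP hint hvi
          (fun h => hvX ((hX v).2 h)) (hGS hp) hvp
        have := hdT v T hT1 hT3
        have := h3 hvi
        omega
  have hsw := Finset.sum_le_sum hw
  rw [Finset.sum_add_distrib, Finset.sum_add_distrib, Finset.sum_ite_mem, Finset.sum_ite_eq',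
    Finset.sum_ite_eq', if_pos (hXV hbot), if_pos (hXV htop), Finset.inter_eq_right.2 hXV,
    Finset.sum_const, hX6, Finset.sum_sub_distrib, ← Finset.mul_sum, ← Finset.mul_sum] at hsw
  have hk' := Finset.sum_le_sum hk
  rw [Finset.sum_add_distrib, hsumm, hsumd, Finset.sum_const] at hk'
  rw [Finset.sum_congr rfl (fun p _ => hEc p), hsumd]
  have z1 : (∑ v ∈ V, (d v : ℤ)) = ((∑ v ∈ V, d v : ℕ) : ℤ) := by push_cast; rfl
  have z2 : (∑ v ∈ V, (m v : ℤ)) = ((∑ v ∈ V, m v : ℕ) : ℤ) := by push_cast; rfl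
  rw [z1, z2] at hsw
  simp only [smul_eq_mul] at hk'
  norm_num at hsw
  omega

lemma angle_data {u w : Pt} (hu : u ≠ 0) (hw : w ≠ 0)
    (h : 2 * π / 3 ≤ InnerProductGeometry.angle u w) :
    ∃ r1 α r2 β : ℝ, 0 < r1 ∧ 0 < r2 ∧ u = r1 • ee α ∧ w = r2 • ee β ∧ α + 2 * π / 3 ≤ β ∧
      β ≤ α + 4 * π / 3 := by
  have hpi := Real.pi_pos
  obtain ⟨r1, α, hr1, -, -, hu'⟩ := polar u 0
  obtain ⟨r2, β, hr2, hb1, hb2, hw'⟩ := polar w α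
  have hr1' : 0 < r1 := lt_of_le_of_ne hr1 (by rintro rfl; simp at hu'; exact hu hu')
  have hr2' : 0 < r2 := lt_of_le_of_ne hr2 (by rintro rfl; simp at hw'; exact hw hw')
  have hin : inner ℝ (ee α) (ee β) = cos (β - α) := by
    rw [Real.cos_sub, PiLp.inner_apply, Fin.sum_univ_two]
    simp
  have hang : cos (InnerProductGeometry.angle u w) = cos (β - α) := by
    rw [hu', hw', InnerProductGeometry.angle_smul_left_of_pos _ _ hr1',
      InnerProductGeometry.angle_smul_right_of_pos _ _ hr2', InnerProductGeometry.cos_angle,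
      norm_ee, norm_ee, hin]
    simp
  have hcos : cos (β - α) ≤ cos (2 * π / 3) := by
    rw [← hang]
    exact Real.cos_le_cos_of_nonneg_of_le_pi (by positivity) (InnerProductGeometry.angle_le_pi _ _) h
  refine ⟨r1, α, r2, β, hr1', hr2', hu', hw', ?_, ?_⟩
  · by_contra hcon
    have := Real.cos_lt_cos_of_nonneg_of_le_pi (x := β - α) (y := 2 * π / 3) (by linarith)
      (by linarith) (by linarith)
    linarith
  · by_contra hcon
    have := Real.cos_lt_cos_of_nonneg_of_le_pi (x := 2 * π - (β - α)) (y := 2 * π / 3)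
      (by linarith) (by linarith) (by linarith)
    rw [Real.cos_two_pi_sub] at this
    linarith

lemma cell_half {P : Set Pt} {S : Finset Pt} {p q x : Pt} {r α : ℝ} (hq : q ∈ S)
    (hx : x + p ∈ Cell P S p) (hr : 0 < r) (h : q - p = r • ee α) (hd : dist q p ≤ 1) :
    x 0 * cos α + x 1 * sin α ≤ 1 / 2 := by
  have h1 := hx.2 q hq
  have hr1 : r ≤ 1 := by
    rw [dist_eq_norm, h, norm_smul, norm_ee, mul_one] at hd
    exact (le_abs_self r).trans hd
  have hq' : q = p + r • ee α := by rw [← h]; abel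
  subst hq'
  simp only [gf, dp, PiLp.add_apply, PiLp.smul_apply, ee_zero, ee_one, smul_eq_mul] at h1
  have hs := Real.sin_sq_add_cos_sq α
  have h2 : r * (2 * (x 0 * cos α + x 1 * sin α)) ≤ r * r := by nlinarith
  have h3 := le_of_mul_le_mul_left h2 hr
  linarith

lemma cell_area {P : Set Pt} (hc : IsCompact P) (hP : Convex ℝ P)
    (hf : (P.extremePoints ℝ).Finite) {S : Finset Pt} {p q q' : Pt}
    (hq : q ∈ S) (hq' : q' ∈ S) (hne : 0 < dist q p) (hne' : 0 < dist q' p)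
    (hd : dist q p ≤ 1) (hd' : dist q' p ≤ 1)
    (hang : 2 * π / 3 ≤ EuclideanGeometry.angle q p q')
    (hball : Cell P S p ⊆ closedBall p 1) :
    volume.real (Cell P S p) ≤
      1 + √3 / 2 + cc * ((((Cell P S p).extremePoints ℝ).ncard : ℝ) - 6) := by
  set K := Cell P S p with hK
  have hKc : IsCompact K := cell_compact hc S p
  have hKv : Convex ℝ K := cell_convex hP S p
  have hKf : (K.extremePoints ℝ).Finite := cell_fin hP hf S p
  let Q : Set Pt := (fun x => x + p) ⁻¹' K
  have hQi : Q = (fun x => x + (-p)) '' K := by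
    ext x
    constructor
    · intro hx; exact ⟨x + p, hx, by simp⟩
    · rintro ⟨y, hy, rfl⟩; simpa [Q] using hy
  have hQc : IsCompact Q := by rw [hQi]; exact hKc.image (by fun_prop)
  have hQv : Convex ℝ Q := hKv.translate_preimage_left p
  have hQe : Q.extremePoints ℝ = (fun x => x + (-p)) '' (K.extremePoints ℝ) := by
    ext x
    constructor
    · intro hx
      refine ⟨x + p, ⟨hx.1, ?_⟩, by simp⟩
      intro a ha b hb hab
      have := hx.2 (x₁ := a - p) (by simpa [Q] using ha) (x₂ := b - p) (by simpa [Q] using hb) (by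
        obtain ⟨s, t, hs, ht, hst, h⟩ := hab
        refine ⟨s, t, hs, ht, hst, ?_⟩
        have : x = s • a + t • b - (s + t) • p := by rw [h, hst]; simp
        rw [this]; module)
      rw [← this]; simp
    · rintro ⟨y, hy, rfl⟩
      refine ⟨by simpa [Q] using hy.1, ?_⟩
      intro a ha b hb hab
      have := hy.2 (x₁ := a + p) ha (x₂ := b + p) hb (by
        obtain ⟨s, t, hs, ht, hst, h⟩ := hab
        refine ⟨s, t, hs, ht, hst, ?_⟩
        have : y = s • a + t • b + (s + t) • p := by rw [h, hst]; simp
        rw [this]; module)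
      rw [← this]; simp
  have hQf : (Q.extremePoints ℝ).Finite := by rw [hQe]; exact hKf.image _
  have hQn : (Q.extremePoints ℝ).ncard = (K.extremePoints ℝ).ncard := by
    rw [hQe]; exact Set.ncard_image_of_injective _ (add_left_injective _)
  have hQm : volume.real Q = volume.real K := by
    rw [measureReal_def, measureReal_def]
    congr 1
    exact measure_preimage_add_right volume p K
  have hQb : Q ⊆ closedBall 0 1 := by
    intro x hx
    have := hball hx
    simpa [dist_eq_norm] using this
  obtain ⟨r1, α, r2, β, hr1, hr2, hu, hw, h1, h2⟩ := angle_data (u := q - p) (w := q' - p)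
    (by rw [← dist_pos, dist_eq_norm]; rw [dist_eq_norm] at hne; simpa using hne)
    (by rw [← dist_pos, dist_eq_norm]; rw [dist_eq_norm] at hne'; simpa using hne') hang
  have := area_lemma hQc hQv hQf hQb (α := α) (β := β)
    (fun x hx => cell_half hq hx hr1 hu hd) (fun x hx => cell_half hq' hx hr2 hw hd') h1 h2
  rw [hQm, hQn] at this
  exact this

lemma vol_ball_real' (p : Pt) : volume.real (closedBall p 1) = π := by
  rw [measureReal_def, EuclideanSpace.volume_closedBall_fin_two]
  simp [Real.pi_pos.le]

/-- If a convex hexagon `Π` is covered by a finite sequence of `N` unit disks, each disk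
containing the center of the next and with no turn sharper than `2π/3`, then
`volume(Π) ≤ N·(1 + √3/2) + 2π`. -/
theorem area_hexagon_le_of_seq_covering (Hex : Set Pt) (hHex : IsConvexHexagon Hex)
    (N : ℕ) (hN : 1 ≤ N) (C : Fin N → Pt)
    (hcover : Hex ⊆ ⋃ i, closedBall (C i) 1)
    (hdist : ∀ i : ℕ, (h : i + 1 < N) →
      0 < dist (C ⟨i + 1, h⟩) (C ⟨i, by omega⟩) ∧
        dist (C ⟨i + 1, h⟩) (C ⟨i, by omega⟩) ≤ 1)
    (hangle : ∀ i : ℕ, (h1 : 1 ≤ i) → (h2 : i ≤ N - 2) →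
      2 * π / 3 ≤ EuclideanGeometry.angle
        (C ⟨i - 1, by omega⟩) (C ⟨i, by omega⟩) (C ⟨i + 1, by omega⟩)) :
    volume Hex ≤ ENNReal.ofReal ((N : ℝ) * (1 + Real.sqrt 3 / 2) + 2 * π) := by
  classical
  obtain ⟨hc, hP, hint, h6⟩ := hHex
  have hf : (Hex.extremePoints ℝ).Finite := Set.finite_of_ncard_ne_zero (by omega)
  set S : Finset Pt := Finset.univ.image C with hSdef
  have hCS : ∀ i, C i ∈ S := fun i => Finset.mem_image_of_mem _ (Finset.mem_univ i)
  have hS : S.Nonempty := ⟨_, hCS ⟨0, by omega⟩⟩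
  have hcount := counting hc hP hint h6 S hS
  set G := Good Hex S with hG
  have hGS : G ⊆ S := Finset.filter_subset _ _
  have hpi := Real.pi_pos
  have hccl := cc_lb
  have hccu := cc_ub
  have hsl := sqrt3_lb
  have hball : ∀ p, Cell Hex S p ⊆ closedBall p 1 := by
    intro p x hx
    obtain ⟨j, hj⟩ := Set.mem_iUnion.1 (hcover hx.1)
    have h1 := (dist_le_iff x p (C j)).2 (hx.2 _ (hCS j))
    exact mem_closedBall.2 (h1.trans (mem_closedBall.1 hj))
  -- covering
  have hcov : volume.real Hex ≤ ∑ p ∈ G, volume.real (Cell Hex S p) := by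
    have hsub : Hex ⊆ ⋃ p ∈ S, Cell Hex S p := by
      intro x hx
      obtain ⟨q, hq, hxq⟩ := cell_exists hS hx
      exact Set.mem_biUnion (show q ∈ (S : Set Pt) from hq) hxq
    have hfin : volume (⋃ p ∈ S, Cell Hex S p) ≠ ∞ := by
      apply ne_top_of_le_ne_top hc.measure_lt_top.ne (measure_mono _)
      exact Set.iUnion₂_subset fun p _ x hx => hx.1
    have h1 := (measureReal_mono hsub hfin).trans
      (measureReal_biUnion_finset_le (μ := volume) S (Cell Hex S))
    refine h1.trans (le_of_eq ?_)
    symm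
    apply Finset.sum_subset hGS
    intro p hp hpG
    have hemp : interior (Cell Hex S p) = ∅ := by
      by_contra hne
      exact hpG (Finset.mem_filter.2 ⟨hp, Set.nonempty_iff_ne_empty.2 hne⟩)
    have h2 : volume (frontier (Cell Hex S p)) = 0 := (cell_convex hP S p).addHaar_frontier _
    have h3 : frontier (Cell Hex S p) = Cell Hex S p := by
      rw [(cell_compact hc S p).isClosed.frontier_eq, hemp, Set.sdiff_empty]
    rw [h3] at h2
    rw [measureReal_def, h2]; rfl
  let I : Pt → Prop := fun p => ∃ i : Fin N, 1 ≤ i.1 ∧ i.1 ≤ N - 2 ∧ C i = p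
  let k : Pt → ℝ := fun p => (((Cell Hex S p).extremePoints ℝ).ncard : ℝ)
  have hcell : ∀ p ∈ G, volume.real (Cell Hex S p) ≤
      (1 + √3 / 2 + cc * (k p - 6)) + (if I p then 0 else π) := by
    intro p hp
    by_cases hI : I p
    · rw [if_pos hI, add_zero]
      obtain ⟨⟨i, hi⟩, h1, h2, rfl⟩ := hI
      simp only at h1 h2
      obtain ⟨i, rfl⟩ : ∃ j, i = j + 1 := ⟨i - 1, by omega⟩
      have d1 := hdist i hi
      have d2 := hdist (i + 1) (by omega)
      have ha := hangle (i + 1) h1 h2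
      simp only [Nat.add_sub_cancel] at ha
      rw [dist_comm] at d1
      exact cell_area hc hP hf (hCS _) (hCS _) d1.1 d2.1 d1.2 d2.2 ha (hball _)
    · rw [if_neg hI]
      have h1 : volume.real (Cell Hex S p) ≤ π := by
        rw [← vol_ball_real' p]
        exact measureReal_mono (hball p) (isCompact_closedBall _ _).measure_lt_top.ne
      have hk : 0 ≤ k p := by positivity
      nlinarith
  have hsum := hcov.trans (Finset.sum_le_sum hcell)
  rw [Finset.sum_add_distrib, Finset.sum_add_distrib, ← Finset.mul_sum, Finset.sum_sub_distrib,
    Finset.sum_const, Finset.sum_const, nsmul_eq_mul, nsmul_eq_mul] at hsum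
  have hpis : ∑ p ∈ G, (if I p then 0 else π) ≤ 2 * π := by
    have e : ∑ p ∈ G, (if I p then 0 else π) = ∑ p ∈ G.filter (fun p => ¬ I p), π := by
      rw [Finset.sum_filter]
      apply Finset.sum_congr rfl
      intro p _
      by_cases h : I p <;> simp [h]
    rw [e, Finset.sum_const, nsmul_eq_mul]
    have hsub : G.filter (fun p => ¬ I p) ⊆ {C ⟨0, by omega⟩, C ⟨N - 1, by omega⟩} := by
      intro p hp
      obtain ⟨hp1, hp2⟩ := Finset.mem_filter.1 hp
      obtain ⟨⟨i, hi⟩, -, rfl⟩ := Finset.mem_image.1 (hGS hp1)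
      simp only [Finset.mem_insert, Finset.mem_singleton]
      by_cases h0 : i = 0
      · left; subst h0; rfl
      · right
        have : i = N - 1 := by
          by_contra hne
          exact hp2 ⟨⟨i, hi⟩, by simp only; omega, by simp only; omega, rfl⟩
        subst this; rfl
    have h2 : (G.filter (fun p => ¬ I p)).card ≤ 2 :=
      (Finset.card_le_card hsub).trans Finset.card_le_two
    have h2' : ((G.filter (fun p => ¬ I p)).card : ℝ) ≤ 2 := by exact_mod_cast h2
    nlinarith
  have hcount' : ∑ p ∈ G, k p ≤ 6 * (G.card : ℝ) := by
    have : ((∑ p ∈ G, ((Cell Hex S p).extremePoints ℝ).ncard : ℕ) : ℝ) ≤ ((6 * G.card : ℕ) : ℝ) := by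
      exact_mod_cast hcount
    push_cast at this
    exact this
  have hGN : (G.card : ℝ) ≤ N := by
    have h1 : G.card ≤ N := by
      calc G.card ≤ S.card := Finset.card_le_card hGS
        _ ≤ (Finset.univ : Finset (Fin N)).card := Finset.card_image_le
        _ = N := by simp
    exact_mod_cast h1
  have hfinal : volume.real Hex ≤ (N : ℝ) * (1 + √3 / 2) + 2 * π := by
    have h1 : cc * (∑ p ∈ G, k p - (G.card : ℝ) * 6) ≤ 0 :=
      mul_nonpos_of_nonneg_of_nonpos (by linarith) (by linarith)
    have h2 : (G.card : ℝ) * (1 + √3 / 2) ≤ N * (1 + √3 / 2) :=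
      mul_le_mul_of_nonneg_right hGN (by positivity)
    linarith
  rw [← ENNReal.ofReal_toReal hc.measure_lt_top.ne]
  exact ENNReal.ofReal_le_ofReal hfinal
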